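/- arXiv:2012.10864 — 2 statements merged into one kernel-verified Lean document; each statement's English description precedes it below -/
import Mathlib

section
/- Post–Widder convergence of Grünwald-type coefficients: under (H0), for every δ > 0, every i ∈ {−1, 0, 1} and every fixed integer j ≥ 0, the functions x ↦ (m/(x+1)) · G^{k_i}_{m−j, (x+1)/m} converge uniformly on [−1+δ, 1] to k_i⁺(x) as the integer m → ∞. -/
open MeasureTheory Set Filter Topology

noncomputable section

/-- The tail `φ((y, ∞))` of the Lévy measure `φ`. -/
def levyTail (φ : Measure ℝ) (y : ℝ) : ℝ := (φ (Ioi y)).toReal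

/-- The function `Φ(x) = ∫_x^∞ φ((y,∞)) dy` for `x > 0`, and `0` for `x ≤ 0`. -/
def PhiFn (φ : Measure ℝ) (x : ℝ) : ℝ :=
  if 0 < x then ∫ y in Ioi x, levyTail φ y else 0

/-- The Laplace exponent `ψ(ξ) = ξ² ∫_0^∞ e^{-ξ x} Φ(x) dx`. -/
def psiFn (φ : Measure ℝ) (ξ : ℂ) : ℂ :=
  ξ ^ 2 * ∫ x in Ioi (0 : ℝ), Complex.exp (-ξ * (x : ℂ)) * (PhiFn φ x : ℂ)

/-- Assumption (H0): `φ` is a nonnegative Borel measure on `(0,∞)` with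
`∫ (z² ∧ z) φ(dz) < ∞` and `∫_{(0,1)} z φ(dz) = ∞`. -/
def H0 (φ : Measure ℝ) : Prop :=
  φ (Iic 0) = 0 ∧
  (∫⁻ z in Ioi (0 : ℝ), ENNReal.ofReal (min (z ^ 2) z) ∂φ) < ⊤ ∧
  (∫⁻ z in Ioo (0 : ℝ) 1, ENNReal.ofReal z ∂φ) = ⊤

/-- Grünwald-type coefficients `G^ψ_{j,h} = ((-1)^j/(j! h^j)) ψ^{(j)}(1/h)`. -/
def grunPsi (φ : Measure ℝ) (j : ℕ) (h : ℝ) : ℝ :=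
  (((-1 : ℂ) ^ j / ((Nat.factorial j : ℂ) * (h : ℂ) ^ j)) *
    iteratedDeriv j (psiFn φ) ((1 : ℂ) / (h : ℂ))).re

/-- Grünwald-type coefficients of order `ψ - 1`:
`G^{ψ-1}_{j,h} = ((-1)^j/(j! h^j)) (d^j/dξ^j)(ψ(ξ)/ξ)|_{ξ=1/h}`. -/
def grunPsiM1 (φ : Measure ℝ) (j : ℕ) (h : ℝ) : ℝ :=
  (((-1 : ℂ) ^ j / ((Nat.factorial j : ℂ) * (h : ℂ) ^ j)) *
    iteratedDeriv j (fun ξ : ℂ => psiFn φ ξ / ξ) ((1 : ℂ) / (h : ℂ))).re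

/-- Grünwald-type coefficients for the scale functions:
`G^{k_i}_{j,h} = ((-1)^j/(j! h^j)) (d^j/dξ^j)(ξ^{-i}/ψ(ξ))|_{ξ=1/h}` for `i ∈ {1,0,-1,-2}`. -/
def grunK (φ : Measure ℝ) (i : ℤ) (j : ℕ) (h : ℝ) : ℝ :=
  (((-1 : ℂ) ^ j / ((Nat.factorial j : ℂ) * (h : ℂ) ^ j)) *
    iteratedDeriv j (fun ξ : ℂ => ξ ^ (-i) / psiFn φ ξ) ((1 : ℂ) / (h : ℂ))).re

/-- The defining properties of the scale kernel `k₋₁⁺` (extension by zero to `(-∞,-1)`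
of the scale function `k₋₁` of Lemma 3.1): nonnegative on `[-1,∞)`, continuous on
`(-1,∞)`, locally integrable, of sub-exponential growth, with Laplace transform
`∫_0^∞ e^{-ξ y} k₋₁(y-1) dy = ξ/ψ(ξ)` on `{Re ξ > 0}`. -/
def IsScaleKernel (φ : Measure ℝ) (k : ℝ → ℝ) : Prop :=
  (∀ x : ℝ, x < -1 → k x = 0) ∧
  (∀ x : ℝ, -1 ≤ x → 0 ≤ k x) ∧
  ContinuousOn k (Ioi (-1)) ∧
  LocallyIntegrableOn k (Ici (-1)) ∧
  (∀ ε : ℝ, 0 < ε → Tendsto (fun x : ℝ => Real.exp (-ε * x) * k x) atTop (nhds 0)) ∧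
  ∀ ξ : ℂ, 0 < ξ.re →
    IntegrableOn (fun y : ℝ => Complex.exp (-ξ * (y : ℂ)) * (k (y - 1) : ℂ)) (Ioi 0) ∧
    (∫ y in Ioi (0 : ℝ), Complex.exp (-ξ * (y : ℂ)) * (k (y - 1) : ℂ)) = ξ / psiFn φ ξ

/-- Iterated antiderivatives: `kIter k 0 = k₋₁⁺` and `kIter k (n+1) = I₊ (kIter k n)`,
so that `kₙ⁺ = kIter k (n+1)` for `n ≥ -1`. -/
def kIter (k : ℝ → ℝ) : ℕ → ℝ → ℝ
  | 0 => k
  | m + 1 => fun x => ∫ y in Iic x, kIter k m y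

/-- The coefficients `G^{k_i}_{l,h}` indexed by an integer `l`, set to `0` for `l < 0`. -/
def grunKZ (φ : Measure ℝ) (i : ℤ) (l : ℤ) (h : ℝ) : ℝ :=
  if l < 0 then 0 else grunK φ i l.toNat h

/-- `g` is a nonnegative function, supported in `[0,∞)` and continuous on `(0,∞)`, whose Laplace
transform exists and equals `F` on the right half plane. -/
structure IsLaplaceOriginal (g : ℝ → ℝ) (F : ℂ → ℂ) : Prop where
  nonneg : ∀ y, 0 < y → 0 ≤ g y
  eq_zero : ∀ y, y < 0 → g y = 0
  cont : ContinuousOn g (Ioi 0)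
  integrable : ∀ s : ℝ, 0 < s → IntegrableOn (fun y => Real.exp (-s * y) * g y) (Ioi 0)
  laplace : ∀ ξ : ℂ, 0 < ξ.re →
    ∫ y in Ioi (0 : ℝ), Complex.exp (-ξ * (y : ℂ)) * (g y : ℂ) = F ξ

/-- The density of the Gamma distribution with shape `n + 1` and rate `s`. -/
def erlangDensity (n : ℕ) (s y : ℝ) : ℝ :=
  s ^ (n + 1) * y ^ n * Real.exp (-s * y) / (n.factorial : ℝ)

theorem erlangDensity_nonneg (n : ℕ) {s y : ℝ} (hs : 0 ≤ s) (hy : 0 ≤ y) :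
    0 ≤ erlangDensity n s y := by
  unfold erlangDensity; positivity

theorem integral_erlangDensity (n : ℕ) {s : ℝ} (hs : 0 < s) :
    ∫ y in Ioi (0 : ℝ), erlangDensity n s y = 1 := by
  have h := Real.integral_rpow_mul_exp_neg_mul_Ioi (a := (n : ℝ) + 1) (r := s)
    (by positivity) hs
  have hcongr : ∀ y : ℝ, erlangDensity n s y =
      (s ^ (n + 1) / (n.factorial : ℝ)) * (y ^ ((n : ℝ) + 1 - 1) * Real.exp (-(s * y))) := by
    intro y
    rw [add_sub_cancel_right, Real.rpow_natCast]
    unfold erlangDensity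
    rw [neg_mul]; ring
  simp_rw [hcongr]
  rw [integral_const_mul, h, Real.Gamma_nat_eq_factorial]
  have : (1 / s) ^ ((n : ℝ) + 1) = 1 / s ^ (n + 1) := by
    rw [← Nat.cast_succ, Real.rpow_natCast, one_div_pow]
  rw [this]
  have : (n.factorial : ℝ) ≠ 0 := by positivity
  field_simp

theorem integrableOn_erlangDensity (n : ℕ) {s : ℝ} (hs : 0 < s) :
    IntegrableOn (erlangDensity n s) (Ioi 0) := by
  apply not_imp_comm.1 integral_undef
  rw [integral_erlangDensity n hs]
  exact one_ne_zero

namespace IsLaplaceOriginal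

variable {g : ℝ → ℝ} {F : ℂ → ℂ}

theorem aestronglyMeasurable (h : IsLaplaceOriginal g F) :
    AEStronglyMeasurable g (volume.restrict (Ioi 0)) :=
  h.cont.aestronglyMeasurable measurableSet_Ioi

theorem integrableOn_erlangDensity_mul (h : IsLaplaceOriginal g F) (n : ℕ) {s : ℝ} (hs : 0 < s) :
    IntegrableOn (fun y => erlangDensity n s y * g y) (Ioi 0) := by
  refine ((h.integrable (s / 2) (by positivity)).const_mul (s * 2 ^ n)).mono' ?_ ?_
  · refine AEStronglyMeasurable.mul ?_ h.aestronglyMeasurable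
    unfold erlangDensity
    fun_prop
  · refine (ae_restrict_iff' measurableSet_Ioi).2 (ae_of_all _ fun y (hy : 0 < y) => ?_)
    have hg := h.nonneg y hy
    rw [Real.norm_of_nonneg (mul_nonneg (erlangDensity_nonneg n hs.le hy.le) hg), ← mul_assoc]
    refine mul_le_mul_of_nonneg_right ?_ hg
    have h1 := Real.pow_div_factorial_le_exp (s / 2 * y) (by positivity) n
    have h2 : Real.exp (-s * y) = Real.exp (-(s / 2) * y) * Real.exp (-(s / 2 * y)) := by
      rw [← Real.exp_add]; ring_nf
    calc erlangDensity n s y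
        = s * 2 ^ n * (Real.exp (-(s / 2) * y) *
          ((s / 2 * y) ^ n / (n.factorial : ℝ) * Real.exp (-(s / 2 * y)))) := by
          unfold erlangDensity
          rw [h2, mul_pow, div_pow, pow_succ' s]
          field_simp
      _ ≤ s * 2 ^ n * (Real.exp (-(s / 2) * y) *
          (Real.exp (s / 2 * y) * Real.exp (-(s / 2 * y)))) := by gcongr
      _ = s * 2 ^ n * Real.exp (-(s / 2) * y) := by
          rw [← Real.exp_add, add_neg_cancel, Real.exp_zero, mul_one]

theorem integrableOn_Iic (h : IsLaplaceOriginal g F) (b : ℝ) : IntegrableOn g (Iic b) := by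
  have hneg : IntegrableOn g (Iic 0) := by
    rw [integrableOn_Iic_iff_integrableOn_Iio]
    exact integrableOn_zero.congr_fun (fun y hy => (h.eq_zero y hy).symm) measurableSet_Iio
  have hpos : IntegrableOn g (Ioc 0 b) := by
    have hi := ((h.integrable 1 one_pos).mono_set
      (Ioc_subset_Ioi_self : Ioc 0 b ⊆ Ioi 0)).const_mul (Real.exp b)
    refine hi.mono' (h.aestronglyMeasurable.mono_set Ioc_subset_Ioi_self) ?_
    refine (ae_restrict_iff' measurableSet_Ioc).2 (ae_of_all _ fun y hy => ?_)
    have hg := h.nonneg y hy.1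
    rw [Real.norm_of_nonneg hg, ← mul_assoc, ← Real.exp_add]
    exact le_mul_of_one_le_left hg (Real.one_le_exp (by linarith [hy.2]))
  refine (hneg.union hpos).mono_set fun y hy => ?_
  rcases le_or_gt y 0 with h0 | h0
  · exact Or.inl h0
  · exact Or.inr ⟨h0, hy⟩

theorem integral_Iic_eq_zero (h : IsLaplaceOriginal g F) {x : ℝ} (hx : x ≤ 0) :
    ∫ y in Iic x, g y = 0 := by
  rw [integral_Iic_eq_integral_Iio]
  exact setIntegral_eq_zero_of_forall_eq_zero fun y hy => h.eq_zero y (lt_of_lt_of_le hy hx)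

theorem integral_Iic_eq (h : IsLaplaceOriginal g F) (x : ℝ) :
    ∫ y in Iic x, g y = ∫ y in (0 : ℝ)..x, g y := by
  rw [← intervalIntegral.integral_Iic_sub_Iic (h.integrableOn_Iic 0) (h.integrableOn_Iic x),
    h.integral_Iic_eq_zero le_rfl, sub_zero]

theorem integrableOn_cexp (h : IsLaplaceOriginal g F) {ξ : ℂ} (hξ : 0 < ξ.re) :
    IntegrableOn (fun y : ℝ => Complex.exp (-ξ * (y : ℂ)) * (g y : ℂ)) (Ioi 0) := by
  refine Integrable.mono (h.integrable ξ.re hξ) ?_ (ae_of_all _ fun y => ?_)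
  · refine AEStronglyMeasurable.mul (by fun_prop) ?_
    exact Complex.continuous_ofReal.comp_aestronglyMeasurable h.aestronglyMeasurable
  · simp [Complex.norm_exp]

theorem primitive (h : IsLaplaceOriginal g F) :
    IsLaplaceOriginal (fun x => ∫ y in Iic x, g y) (fun ξ => F ξ / ξ) := by
  have hexp : ∀ {ξ : ℂ}, 0 < ξ.re →
      IntegrableOn (fun y : ℝ => Complex.exp (-ξ * (y : ℂ))) (Ioi 0) := fun {ξ} hξ =>
    integrableOn_exp_mul_complex_Ioi (by simpa using hξ) 0
  have hconv : ∀ (ξ : ℂ) (x : ℝ),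
      ∫ t in (0 : ℝ)..x, ContinuousLinearMap.mul ℝ ℂ
        (Complex.exp (-ξ * (t : ℂ)) * (g t : ℂ)) (Complex.exp (-ξ * ((x - t : ℝ) : ℂ))) =
      Complex.exp (-ξ * (x : ℂ)) * ((∫ y in Iic x, g y : ℝ) : ℂ) := by
    intro ξ x
    rw [h.integral_Iic_eq, ← intervalIntegral.integral_ofReal,
      ← intervalIntegral.integral_const_mul]
    refine intervalIntegral.integral_congr fun t _ => ?_
    simp only [ContinuousLinearMap.mul_apply']
    have : Complex.exp (-ξ * (x : ℂ)) =
        Complex.exp (-ξ * (t : ℂ)) * Complex.exp (-ξ * ((x - t : ℝ) : ℂ)) := by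
      rw [← Complex.exp_add]; push_cast; ring_nf
    rw [this]; ring
  refine ⟨fun x hx => ?_, fun x hx => h.integral_Iic_eq_zero hx.le, ?_, fun s hs => ?_,
    fun ξ hξ => ?_⟩
  · rw [h.integral_Iic_eq, intervalIntegral.integral_of_le hx.le]
    exact setIntegral_nonneg measurableSet_Ioc fun y hy => h.nonneg y hy.1
  · simp_rw [h.integral_Iic_eq]
    refine (intervalIntegral.continuous_primitive (fun a b => ?_) 0).continuousOn
    exact intervalIntegrable_iff.2 ((h.integrableOn_Iic (max a b)).mono_set fun y hy => hy.2)
  · have hs' : 0 < (s : ℂ).re := by simpa using hs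
    have hi := (integrable_posConvolution (h.integrableOn_cexp hs') (hexp hs')
      (ContinuousLinearMap.mul ℝ ℂ)).re.integrableOn (s := Ioi 0)
    refine hi.congr_fun (fun x hx => ?_) measurableSet_Ioi
    simp only [posConvolution, indicator_of_mem hx, hconv]
    rw [show -(s : ℂ) * (x : ℂ) = ((-s * x : ℝ) : ℂ) by push_cast; ring, ← Complex.ofReal_exp,
      ← Complex.ofReal_mul]
    exact Complex.ofReal_re _
  · have hi := integral_posConvolution (h.integrableOn_cexp hξ) (hexp hξ)
      (ContinuousLinearMap.mul ℝ ℂ)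
    simp_rw [hconv] at hi
    rw [hi, h.laplace ξ hξ, integral_exp_mul_complex_Ioi (by simpa using hξ)]
    simp [div_eq_mul_inv]

theorem iteratedDeriv_eq (h : IsLaplaceOriginal g F) {s : ℝ} (hs : 0 < s) (n : ℕ) :
    iteratedDeriv n F (s : ℂ) =
      ((∫ y in Ioi (0 : ℝ), (-y) ^ n * Real.exp (-s * y) * g y : ℝ) : ℂ) := by
  set ν : Measure ℝ := (volume.restrict (Ioi 0)).withDensity fun y => ENNReal.ofReal (g y)
  have hm : AEMeasurable (fun y => ENNReal.ofReal (g y)) (volume.restrict (Ioi 0)) :=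
    h.aestronglyMeasurable.aemeasurable.ennreal_ofReal
  have hfin : ∀ᵐ y ∂(volume.restrict (Ioi (0 : ℝ))), ENNReal.ofReal (g y) < ⊤ :=
    ae_of_all _ fun y => ENNReal.ofReal_lt_top
  have hsub : Ioi (0 : ℝ) ⊆ ProbabilityTheory.integrableExpSet (fun y => -y) ν := fun r hr => by
    refine (integrable_withDensity_iff_integrable_smul₀' hm hfin).2 ?_
    refine (h.integrable r hr).congr_fun (fun y hy => ?_) measurableSet_Ioi
    simp only [ENNReal.toReal_ofReal (h.nonneg y hy), smul_eq_mul, mul_neg, neg_mul]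
    ring
  have hint : ∀ f : ℝ → ℂ, ∫ y, f y ∂ν = ∫ y in Ioi (0 : ℝ), f y * (g y : ℂ) := fun f => by
    rw [integral_withDensity_eq_integral_toReal_smul₀ hm hfin]
    refine setIntegral_congr_fun measurableSet_Ioi fun y hy => ?_
    simp only [ENNReal.toReal_ofReal (h.nonneg y hy), Complex.real_smul]
    ring
  have hF : F =ᶠ[𝓝 (s : ℂ)] ProbabilityTheory.complexMGF (fun y => -y) ν := by
    have hopen : IsOpen {ξ : ℂ | 0 < ξ.re} := isOpen_lt continuous_const Complex.continuous_re
    filter_upwards [hopen.mem_nhds (show (s : ℂ) ∈ {ξ : ℂ | 0 < ξ.re} by simpa using hs)] with ξ hξ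
    rw [ProbabilityTheory.complexMGF, hint, ← h.laplace ξ hξ]
    simp
  rw [hF.iteratedDeriv_eq, ProbabilityTheory.iteratedDeriv_complexMGF
    (mem_interior.2 ⟨_, hsub, isOpen_Ioi, by simpa using hs⟩), hint, ← integral_complex_ofReal]
  refine integral_congr_ae (ae_of_all _ fun y => ?_)
  push_cast
  ring_nf

theorem coefficient_eq (h : IsLaplaceOriginal g F) {s : ℝ} (hs : 0 < s) (n : ℕ) :
    s * (((-1 : ℂ) ^ n / ((n.factorial : ℂ) * ((s⁻¹ : ℝ) : ℂ) ^ n)) *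
      iteratedDeriv n F ((1 : ℂ) / ((s⁻¹ : ℝ) : ℂ))).re =
    ∫ y in Ioi (0 : ℝ), erlangDensity n s y * g y := by
  have h1 : (1 : ℂ) / ((s⁻¹ : ℝ) : ℂ) = (s : ℂ) := by simp
  have h2 : (-1 : ℂ) ^ n / ((n.factorial : ℂ) * ((s⁻¹ : ℝ) : ℂ) ^ n) =
      (((-1) ^ n / ((n.factorial : ℝ) * s⁻¹ ^ n) : ℝ) : ℂ) := by push_cast; rfl
  rw [h1, h.iteratedDeriv_eq hs, h2, ← Complex.ofReal_mul, Complex.ofReal_re,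
    ← integral_const_mul, ← integral_const_mul]
  refine integral_congr_ae (ae_of_all _ fun y => ?_)
  have h3 : (-y) ^ n = (-1) ^ n * y ^ n := by rw [← mul_pow]; ring
  have h4 : ((-1 : ℝ) ^ n) * (-1) ^ n = 1 := by rw [← mul_pow]; norm_num
  simp only [h3]
  unfold erlangDensity
  rw [inv_pow]
  field_simp
  linear_combination (s ^ (n + 1) * y ^ n * g y) * h4

end IsLaplaceOriginal

/-- Away from its maximum at `1`, the function `u ↦ u e^{1-u}` is bounded away from `1`. -/
theorem mul_exp_one_sub_le {η u : ℝ} (hη : 0 < η) (hη1 : η ≤ 1) (hu : 0 ≤ u)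
    (hdist : η ≤ |u - 1|) : u * Real.exp (1 - u) ≤ (1 + η ^ 2 / 8)⁻¹ := by
  have h1 : (1 + (u - 1) / 2) ^ 2 ≤ Real.exp (u - 1) := by
    have h := Real.add_one_le_exp ((u - 1) / 2)
    calc (1 + (u - 1) / 2) ^ 2 ≤ Real.exp ((u - 1) / 2) ^ 2 :=
          pow_le_pow_left₀ (by linarith) (by linarith) 2
      _ = Real.exp (u - 1) := by rw [← Real.exp_nat_mul]; push_cast; ring_nf
  have h2 : u * η ^ 2 ≤ 2 * (u - 1) ^ 2 := by
    have h3 : η ^ 2 ≤ (u - 1) ^ 2 := by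
      rw [← sq_abs (u - 1)]; exact pow_le_pow_left₀ hη.le hdist 2
    rcases le_or_gt u 2 with h4 | h4
    · nlinarith [sq_nonneg η]
    · nlinarith [mul_le_mul_of_nonneg_left (pow_le_one₀ hη.le hη1 : η ^ 2 ≤ 1) hu]
  rw [← neg_sub u 1, Real.exp_neg, ← div_eq_mul_inv, div_le_iff₀ (Real.exp_pos _),
    ← div_eq_inv_mul, le_div_iff₀ (by positivity)]
  nlinarith

theorem erlangDensity_mul_exp_le {δ η t y : ℝ} (hδ : 0 < δ) (hη : 0 < η) (hη2 : η ≤ 2)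
    (hδt : δ ≤ t) (ht2 : t ≤ 2) (hy : 0 < y) (hdist : η ≤ |y - t|) (j N : ℕ) :
    erlangDensity (N + 4) (((N + 4 + j : ℕ) : ℝ) / t) y * Real.exp y ≤
      ((N + 4 + j : ℕ) : ℝ) / δ * (16 * Real.exp j) * ((1 + (η / 2) ^ 2 / 8)⁻¹) ^ N := by
  have ht : 0 < t := hδ.trans_le hδt
  obtain ⟨u, rfl⟩ : ∃ u, y = t * u := ⟨y / t, by field_simp⟩
  have hu : 0 < u := pos_of_mul_pos_right hy ht.le
  set m : ℕ := N + 4 + j with hm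
  have hm0 : (0 : ℝ) < m := by rw [hm]; positivity
  have hmN : (m : ℝ) = (N + 4 : ℕ) + j := by rw [hm]; push_cast; ring
  have hdist' : η / 2 ≤ |u - 1| := by
    rw [show t * u - t = t * (u - 1) by ring, abs_mul, abs_of_pos ht] at hdist
    nlinarith [abs_nonneg (u - 1)]
  have hq := mul_exp_one_sub_le (by positivity) (by linarith) hu.le hdist'
  have hfac := Real.pow_div_factorial_le_exp (m : ℝ) hm0.le (N + 4)
  have hq4 : (u * Real.exp (1 - u)) ^ 4 * Real.exp (t * u) ≤ 16 := by
    have h1 : u / 2 ≤ Real.exp (u / 2 - 1) := by linarith [Real.add_one_le_exp (u / 2 - 1)]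
    have h2 : u * Real.exp (1 - u) ≤ 2 * Real.exp (-(u / 2)) := by
      calc u * Real.exp (1 - u) ≤ (2 * Real.exp (u / 2 - 1)) * Real.exp (1 - u) := by
            gcongr; linarith
        _ = 2 * Real.exp (-(u / 2)) := by rw [mul_assoc, ← Real.exp_add]; ring_nf
    calc (u * Real.exp (1 - u)) ^ 4 * Real.exp (t * u)
        ≤ (2 * Real.exp (-(u / 2))) ^ 4 * Real.exp (2 * u) := by gcongr
      _ = 16 := by
          rw [mul_pow, ← Real.exp_nat_mul, mul_assoc, ← Real.exp_add]
          push_cast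
          rw [show 4 * -(u / 2) + 2 * u = 0 by ring, Real.exp_zero]
          norm_num
  have hexp : Real.exp m * Real.exp (-(m * u)) = Real.exp (1 - u) ^ (N + 4) *
      Real.exp (j * (1 - u)) := by
    rw [← Real.exp_nat_mul, ← Real.exp_add, ← Real.exp_add, hmN]
    ring_nf
  have hj : Real.exp (j * (1 - u)) ≤ Real.exp j := by
    apply Real.exp_le_exp.2
    nlinarith [(Nat.cast_nonneg j : (0 : ℝ) ≤ j)]
  calc erlangDensity (N + 4) ((m : ℝ) / t) (t * u) * Real.exp (t * u)
      = (m / t) * ((m : ℝ) ^ (N + 4) / ((N + 4).factorial : ℝ)) * u ^ (N + 4) *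
        Real.exp (-(m * u)) * Real.exp (t * u) := by
        unfold erlangDensity
        rw [show -((m : ℝ) / t) * (t * u) = -(m * u) by field_simp, pow_succ _ (N + 4), div_pow,
          mul_pow]
        field_simp
    _ ≤ (m / δ) * Real.exp m * u ^ (N + 4) * Real.exp (-(m * u)) * Real.exp (t * u) := by
        gcongr
    _ = (m / δ) * ((u * Real.exp (1 - u)) ^ 4 * Real.exp (t * u) * Real.exp (j * (1 - u))) *
        (u * Real.exp (1 - u)) ^ N := by
        linear_combination (m / δ * u ^ (N + 4) * Real.exp (t * u)) * hexp
    _ ≤ (m / δ) * (16 * Real.exp j) * ((1 + (η / 2) ^ 2 / 8)⁻¹) ^ N := by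
        gcongr

theorem IsLaplaceOriginal.abs_integral_sub_le {g : ℝ → ℝ} {F : ℂ → ℂ}
    (h : IsLaplaceOriginal g F) {n : ℕ} {s t ε η S : ℝ} (hs : 0 < s) (ht : 0 < t) (hε : 0 ≤ ε)
    (hS : 0 ≤ S) (hlocal : ∀ y, 0 < y → |y - t| < η → |g y - g t| ≤ ε)
    (htail : ∀ y, 0 < y → η ≤ |y - t| → erlangDensity n s y * Real.exp y ≤ S) :
    |(∫ y in Ioi (0 : ℝ), erlangDensity n s y * g y) - g t| ≤
      ε + S * ((∫ y in Ioi (0 : ℝ), Real.exp (-1 * y) * g y) + g t) := by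
  have hp := integrableOn_erlangDensity n hs
  have hpg := h.integrableOn_erlangDensity_mul n hs
  have hg1 := h.integrable 1 one_pos
  have he := integrableOn_exp_neg_Ioi 0
  have hgt := h.nonneg t ht
  have heq : (∫ y in Ioi (0 : ℝ), erlangDensity n s y * g y) - g t =
      ∫ y in Ioi (0 : ℝ), (erlangDensity n s y * g y - erlangDensity n s y * g t) := by
    rw [integral_sub hpg (hp.mul_const _), integral_mul_const, integral_erlangDensity n hs, one_mul]
  have hmajS : IntegrableOn
      (fun y => S * (Real.exp (-1 * y) * g y + Real.exp (-y) * g t)) (Ioi 0) :=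
    (hg1.add (he.mul_const (g t))).const_mul S
  have hmaj : IntegrableOn (fun y => erlangDensity n s y * ε +
      S * (Real.exp (-1 * y) * g y + Real.exp (-y) * g t)) (Ioi 0) :=
    (hp.mul_const ε).add hmajS
  have hval : ∫ y in Ioi (0 : ℝ), (erlangDensity n s y * ε +
      S * (Real.exp (-1 * y) * g y + Real.exp (-y) * g t)) =
      ε + S * ((∫ y in Ioi (0 : ℝ), Real.exp (-1 * y) * g y) + g t) := by
    rw [integral_add (hp.mul_const ε) hmajS, integral_const_mul, integral_add hg1 (he.mul_const _), integral_mul_const,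
      integral_mul_const, integral_erlangDensity n hs, integral_exp_neg_Ioi_zero, one_mul, one_mul]
  rw [heq, ← hval, ← Real.norm_eq_abs]
  refine norm_integral_le_of_norm_le hmaj
    ((ae_restrict_iff' measurableSet_Ioi).2 (ae_of_all _ fun y (hy : 0 < y) => ?_))
  have hp0 := erlangDensity_nonneg n hs.le hy.le
  have hgy := h.nonneg y hy
  rw [← mul_sub, norm_mul, Real.norm_of_nonneg hp0, Real.norm_eq_abs]
  rcases lt_or_ge |y - t| η with hc | hc
  · have := mul_le_mul_of_nonneg_left (hlocal y hy hc) hp0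
    have : 0 ≤ S * (Real.exp (-1 * y) * g y + Real.exp (-y) * g t) := by positivity
    linarith
  · have h1 : erlangDensity n s y ≤ S * Real.exp (-y) := by
      rw [Real.exp_neg, ← div_eq_mul_inv, le_div_iff₀ (Real.exp_pos y)]
      exact htail y hy hc
    have h2 : |g y - g t| ≤ g y + g t := by
      rw [abs_le]; constructor <;> linarith
    have h3 : erlangDensity n s y * |g y - g t| ≤ S * Real.exp (-y) * (g y + g t) :=
      mul_le_mul h1 h2 (abs_nonneg _) (by positivity)
    have h4 : 0 ≤ erlangDensity n s y * ε := by positivity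
    rw [neg_one_mul]
    linarith

/-- The Post–Widder inversion formula, locally uniformly, with shifted order of derivative. -/
theorem IsLaplaceOriginal.tendstoUniformlyOn {g : ℝ → ℝ} {F : ℂ → ℂ}
    (h : IsLaplaceOriginal g F) {δ : ℝ} (hδ : 0 < δ) (j : ℕ) :
    TendstoUniformlyOn
      (fun (m : ℕ) (t : ℝ) => ∫ y in Ioi (0 : ℝ), erlangDensity (m - j) ((m : ℝ) / t) y * g y)
      g atTop (Icc δ 2) := by
  rw [Metric.tendstoUniformlyOn_iff]
  intro ε hε
  have hsub : Icc (δ / 2) 3 ⊆ Ioi (0 : ℝ) := fun y hy => (half_pos hδ).trans_le hy.1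
  have hcont := h.cont.mono hsub
  obtain ⟨η₀, hη₀, huc⟩ := Metric.uniformContinuousOn_iff.1
    (isCompact_Icc.uniformContinuousOn_of_continuous hcont) (ε / 2) (half_pos hε)
  obtain ⟨M, hM⟩ := isCompact_Icc.exists_bound_of_continuousOn hcont
  set η := min η₀ (min (δ / 2) 1)
  have hη : 0 < η := by positivity
  have hη1 : η ≤ 1 := (min_le_right _ _).trans (min_le_right _ _)
  have hηδ : η ≤ δ / 2 := (min_le_right _ _).trans (min_le_left _ _)
  set C := (∫ y in Ioi (0 : ℝ), Real.exp (-1 * y) * g y) + M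
  set r := (1 + (η / 2) ^ 2 / 8)⁻¹
  have hr0 : 0 < r := by positivity
  have hr1 : r < 1 := inv_lt_one_of_one_lt₀ (by linarith [show 0 < (η / 2) ^ 2 / 8 by positivity])
  have hlim : Tendsto (fun m : ℕ => (m : ℝ) / δ * (16 * Real.exp j) * r ^ (m - j - 4) * C) atTop
      (𝓝 0) := by
    have h1 := (tendsto_self_mul_const_pow_of_lt_one hr0.le hr1).const_mul
      (16 * Real.exp j / δ / r ^ (j + 4) * C)
    rw [mul_zero] at h1
    refine h1.congr' ?_
    filter_upwards [eventually_ge_atTop (j + 4)] with m hm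
    obtain ⟨N, rfl⟩ := Nat.exists_eq_add_of_le hm
    rw [show j + 4 + N - j - 4 = N by omega, pow_add r (j + 4) N]
    field_simp
  filter_upwards [hlim.eventually (gt_mem_nhds (half_pos hε)), eventually_ge_atTop (j + 4)]
    with m hm hmj t ht
  have ht0 : 0 < t := hδ.trans_le ht.1
  have hm0 : (0 : ℝ) < m := by exact_mod_cast (by omega : 0 < m)
  have htI : t ∈ Icc (δ / 2) 3 := ⟨by linarith [ht.1], by linarith [ht.2]⟩
  rw [dist_comm, Real.dist_eq]
  have hS : 0 ≤ (m : ℝ) / δ * (16 * Real.exp j) * r ^ (m - j - 4) := by positivity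
  refine (h.abs_integral_sub_le (η := η) (ε := ε / 2)
    (S := (m : ℝ) / δ * (16 * Real.exp j) * r ^ (m - j - 4))
    (div_pos hm0 ht0) ht0 (half_pos hε).le hS ?_ ?_).trans_lt ?_
  · intro y _ hyt
    have hyt' := abs_lt.1 (hyt.trans_le hηδ)
    have hyt'' := abs_lt.1 (hyt.trans_le hη1)
    have hyI : y ∈ Icc (δ / 2) 3 := ⟨by linarith [ht.1], by linarith [ht.2]⟩
    exact (huc y hyI t htI (hyt.trans_le (min_le_left _ _))).le
  · intro y hy hyt
    have hb := erlangDensity_mul_exp_le hδ hη (by linarith) ht.1 ht.2 hy hyt j (m - j - 4)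
    rwa [show m - j - 4 + 4 + j = m by omega, show m - j - 4 + 4 = m - j by omega] at hb
  · have hgt : g t ≤ M := (le_abs_self _).trans (hM t htI)
    have := mul_le_mul_of_nonneg_left
      (add_le_add_right hgt (∫ y in Ioi (0 : ℝ), Real.exp (-1 * y) * g y)) hS
    linarith

theorem IsScaleKernel.isLaplaceOriginal {φ : Measure ℝ} {k : ℝ → ℝ} (hk : IsScaleKernel φ k) :
    IsLaplaceOriginal (fun y => k (y - 1)) (fun ξ => ξ / psiFn φ ξ) := by
  obtain ⟨hzero, hnonneg, hcont, -, -, hlap⟩ := hk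
  refine ⟨fun y hy => hnonneg _ (by linarith), fun y hy => hzero _ (by linarith), ?_, fun s hs => ?_,
    fun ξ hξ => (hlap ξ hξ).2⟩
  · refine hcont.comp (by fun_prop) fun y (hy : 0 < y) => ?_
    simpa using hy
  · refine IntegrableOn.congr_fun (hlap s (by simpa using hs)).1.re (fun y _ => ?_) measurableSet_Ioi
    rw [show -(s : ℂ) * (y : ℂ) = ((-s * y : ℝ) : ℂ) by push_cast; ring, ← Complex.ofReal_exp,
      ← Complex.ofReal_mul]
    exact Complex.ofReal_re _

theorem kIter_succ_sub_one (k : ℝ → ℝ) (n : ℕ) (x : ℝ) :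
    kIter k (n + 1) (x - 1) = ∫ y in Iic x, kIter k n (y - 1) := by
  simp only [kIter]
  rw [← integral_indicator measurableSet_Iic, ← integral_indicator measurableSet_Iic,
    ← integral_sub_right_eq_self _ (1 : ℝ)]
  simp [indicator]

theorem IsScaleKernel.isLaplaceOriginal_kIter {φ : Measure ℝ} {k : ℝ → ℝ}
    (hk : IsScaleKernel φ k) (n : ℕ) :
    IsLaplaceOriginal (fun y => kIter k n (y - 1)) (fun ξ => ξ / psiFn φ ξ / ξ ^ n) := by
  induction n with
  | zero => simpa [kIter] using hk.isLaplaceOriginal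
  | succ n ih =>
    have := ih.primitive
    simp_rw [← kIter_succ_sub_one] at this
    convert this using 2 with ξ
    rw [pow_succ, div_div _ (ξ ^ n)]

theorem IsLaplaceOriginal.congr {g : ℝ → ℝ} {F F' : ℂ → ℂ} (h : IsLaplaceOriginal g F)
    (hF : ∀ ξ : ℂ, 0 < ξ.re → F ξ = F' ξ) : IsLaplaceOriginal g F' :=
  { h with laplace := fun ξ hξ => (h.laplace ξ hξ).trans (hF ξ hξ) }

/-- Post–Widder uniform convergence of the Grünwald-type coefficients
to the scale functions `k_i⁺` on `[-1+δ, 1]`. -/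
theorem postWidder_uniform (φ : Measure ℝ) (hH0 : H0 φ) (k : ℝ → ℝ)
    (hk : IsScaleKernel φ k) (δ : ℝ) (hδ : 0 < δ)
    (i : ℤ) (hi : i ∈ ({-1, 0, 1} : Set ℤ)) (j : ℕ) :
    TendstoUniformlyOn
      (fun (m : ℕ) (x : ℝ) =>
        ((m : ℝ) / (x + 1)) * grunKZ φ i ((m : ℤ) - (j : ℤ)) ((x + 1) / m))
      (kIter k (i + 1).toNat) atTop (Icc (-1 + δ) 1) := by
  have horig : IsLaplaceOriginal (fun y => kIter k (i + 1).toNat (y - 1))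
      (fun ξ : ℂ => ξ ^ (-i) / psiFn φ ξ) := by
    refine (hk.isLaplaceOriginal_kIter (i + 1).toNat).congr fun ξ hξ => ?_
    have hξ0 : ξ ≠ 0 := by rintro rfl; simp at hξ
    have hi1 : ((i + 1).toNat : ℤ) = i + 1 := by
      apply Int.toNat_of_nonneg
      rcases hi with rfl | rfl | rfl <;> norm_num
    rw [← zpow_natCast, hi1, zpow_add₀ hξ0, zpow_neg, zpow_one]
    field_simp
  have hunif := (horig.tendstoUniformlyOn hδ j).comp (fun x : ℝ => x + 1)
  have hlim : (fun y => kIter k (i + 1).toNat (y - 1)) ∘ (fun x : ℝ => x + 1) =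
      kIter k (i + 1).toNat := by
    ext x; simp
  rw [hlim] at hunif
  refine (hunif.mono fun x hx => ?_).congr ?_
  · exact ⟨by linarith [hx.1], by linarith [hx.2]⟩
  · filter_upwards [eventually_ge_atTop (j + 1)] with m hm x hx
    have hs : 0 < (m : ℝ) / (x + 1) :=
      div_pos (by exact_mod_cast (by omega : 0 < m)) (by linarith [hx.1])
    have hcoef := horig.coefficient_eq hs (m - j)
    rw [inv_div] at hcoef
    dsimp only [Function.comp_apply]
    rw [← hcoef, grunKZ, if_neg (by omega), grunK, show ((m : ℤ) - j).toNat = m - j by omega]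
end
end

section
/- First-order expansion of the order ψ−1 quadrature: under (H0), let m ≥ 6 and let g ∈ C^m[−1,1] satisfy g^{(j)}(−1) = 0 for j = 0, 1, …, m; extend g by zero to (−∞,−1). Define I^ψ_+ g(x) = ∫_{−1}^x k₀⁺(x − y − 1) g(y) dy for x ∈ [−1,1] and I^ψ_+ g(x) = 0 for x < −1, and set F₊[g](x) = −(1/2) ∫_0^{x+1} g'(x − z) ( ∫_0^z u φ((u,∞)) k₋₁⁺(z − u − 1) du ) dz. Then F₊[g] is continuous on [−1,1] with F₊[g](−1) = 0, and there is a constant C > 0 such that for every x ∈ [−1,1] and every h ∈ (0,1]: | Σ_{j=0}^∞ G^{ψ−1}_{j,h} (I^ψ_+ g)(x − jh) − ∫_{−1}^x g(y) dy − h F₊[g](x) | ≤ C h². -/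
open MeasureTheory Set Filter Topology

noncomputable section

/-- The Lévy integral `I^ψ_+ g (x) = ∫_{-1}^x k₀⁺(x-y-1) g(y) dy` for `x ≥ -1`, and `0`
for `x < -1`. -/
def IplusOp (k0 g : ℝ → ℝ) (x : ℝ) : ℝ :=
  if -1 ≤ x then ∫ y in (-1 : ℝ)..x, k0 (x - y - 1) * g y else 0

/-- The first-order correction term
`F₊[g](x) = -(1/2) ∫_0^{x+1} g'(x-z) (∫_0^z u φ((u,∞)) k₋₁⁺(z-u-1) du) dz`. -/
def Fplus (φ : Measure ℝ) (k g : ℝ → ℝ) (x : ℝ) : ℝ :=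
  -(1 / 2) * ∫ z in (0 : ℝ)..(x + 1),
    deriv g (x - z) * ∫ u in (0 : ℝ)..z, u * levyTail φ u * k (z - u - 1)

section LevyTail

variable {φ : Measure ℝ}

theorem levyTail_nonneg (φ : Measure ℝ) (y : ℝ) : 0 ≤ levyTail φ y := ENNReal.toReal_nonneg

theorem measurable_levyTail (φ : Measure ℝ) : Measurable (levyTail φ) := by
  have h : Antitone fun y : ℝ => φ (Ioi y) := fun a b hab => measure_mono (Ioi_subset_Ioi hab)
  exact h.measurable.ennreal_toReal

theorem H0.measure_Ioi_lt_top (hφ : H0 φ) {y : ℝ} (hy : 0 < y) : φ (Ioi y) < ⊤ := by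
  have hc : 0 < min (y ^ 2) y := lt_min (by positivity) hy
  have h1 : ENNReal.ofReal (min (y ^ 2) y) * φ (Ioi y) < ⊤ := by
    refine lt_of_le_of_lt ?_ hφ.2.1
    rw [← setLIntegral_const]
    calc ∫⁻ _ in Ioi y, ENNReal.ofReal (min (y ^ 2) y) ∂φ
        ≤ ∫⁻ z in Ioi y, ENNReal.ofReal (min (z ^ 2) z) ∂φ := by
          refine setLIntegral_mono (by fun_prop) fun z hz => ENNReal.ofReal_le_ofReal ?_
          have hz' : y < z := hz
          gcongr
      _ ≤ _ := lintegral_mono_set (Ioi_subset_Ioi hy.le)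
  by_contra hcon
  rw [not_lt, top_le_iff] at hcon
  rw [hcon, ENNReal.mul_top (ENNReal.ofReal_pos.2 hc).ne'] at h1
  exact lt_irrefl _ h1

theorem H0.levyTail_antitoneOn (hφ : H0 φ) : AntitoneOn (levyTail φ) (Ioi 0) := fun _ ha _ _ hab =>
  ENNReal.toReal_mono (hφ.measure_Ioi_lt_top ha).ne (measure_mono (Ioi_subset_Ioi hab))

theorem H0.integrableOn_min_mul_levyTail (hφ : H0 φ) :
    IntegrableOn (fun y => min 1 y * levyTail φ y) (Ioi 0) := by
  refine ⟨((measurable_const.min measurable_id).mul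
    (measurable_levyTail φ)).aestronglyMeasurable, ?_⟩
  have hpos : ∀ᵐ z ∂φ, 0 < z := by
    rw [ae_iff]
    simpa [Iic, not_lt] using hφ.1
  have key := lintegral_comp_eq_lintegral_meas_lt_mul φ (f := fun z => z) (g := fun t => min 1 t)
    (hpos.mono fun z hz => hz.le) measurable_id.aemeasurable
    (fun t _ => (by fun_prop : Continuous fun t : ℝ => min 1 t).intervalIntegrable _ _)
    ((ae_restrict_iff' measurableSet_Ioi).2 (Eventually.of_forall fun t ht =>
      le_min zero_le_one (le_of_lt ht)))
  rw [hasFiniteIntegral_iff_enorm]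
  have h2 : ∫⁻ y in Ioi (0 : ℝ), ‖min 1 y * levyTail φ y‖ₑ
      = ∫⁻ t in Ioi (0 : ℝ), φ {a | t < a} * ENNReal.ofReal (min 1 t) := by
    refine setLIntegral_congr_fun measurableSet_Ioi fun y hy => ?_
    have hy' : (0 : ℝ) < y := hy
    have hm : 0 ≤ min 1 y := le_min zero_le_one hy'.le
    show ‖min 1 y * levyTail φ y‖ₑ = _
    rw [Real.enorm_eq_ofReal (mul_nonneg hm (levyTail_nonneg _ _)), ENNReal.ofReal_mul hm, mul_comm]
    congr 1
    exact ENNReal.ofReal_toReal (hφ.measure_Ioi_lt_top hy').ne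
  rw [h2, ← key]
  refine lt_of_le_of_lt ?_ hφ.2.1
  rw [← lintegral_indicator measurableSet_Ioi]
  refine lintegral_mono_ae (hpos.mono fun z hz => ?_)
  rw [indicator_of_mem (show z ∈ Ioi (0 : ℝ) from hz)]
  refine ENNReal.ofReal_le_ofReal ?_
  have hI : ∀ c : ℝ, (∀ t ∈ Icc 0 z, min 1 t ≤ c) → ∫ t in (0 : ℝ)..z, min 1 t ≤ z * c := by
    intro c hc
    calc ∫ t in (0 : ℝ)..z, min 1 t ≤ ∫ _ in (0 : ℝ)..z, c :=
          intervalIntegral.integral_mono_on hz.le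
            ((by fun_prop : Continuous fun t : ℝ => min 1 t).intervalIntegrable _ _) (by simp) hc
      _ = z * c := by simp
  refine le_min ?_ ?_
  · rw [sq]
    exact hI z fun t ht => (min_le_right _ _).trans ht.2
  · simpa using hI 1 fun t ht => min_le_left _ _

theorem H0.exists_levyTail_pos (hφ : H0 φ) : ∃ y : ℝ, 0 < y ∧ 0 < levyTail φ y := by
  by_contra hcon
  push Not at hcon
  have h0 : ∀ n : ℕ, φ (Ioi (1 / ((n : ℝ) + 1))) = 0 := by
    intro n
    have hn : (0 : ℝ) < 1 / ((n : ℝ) + 1) := by positivity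
    have h1 : levyTail φ _ = 0 := le_antisymm (hcon _ hn) (levyTail_nonneg _ _)
    rcases (ENNReal.toReal_eq_zero_iff _).1 h1 with h | h
    · exact h
    · exact absurd h (hφ.measure_Ioi_lt_top hn).ne
  have h1 : φ (Ioi 0) = 0 := by
    refine measure_mono_null (fun z hz => ?_) (measure_iUnion_null h0)
    obtain ⟨n, hn⟩ := exists_nat_one_div_lt (show (0 : ℝ) < z from hz)
    exact mem_iUnion.2 ⟨n, hn⟩
  have h2 := hφ.2.2
  rw [setLIntegral_measure_zero _ _ (measure_mono_null Ioo_subset_Ioi_self h1)] at h2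
  exact ENNReal.zero_ne_top h2

/-- Integrability against the Lévy tail for functions dominated by `min 1 y`. -/
theorem H0.integrableOn_mul_levyTail {E : Type*} [NormedAddCommGroup E] [NormedSpace ℝ E]
    (hφ : H0 φ) {F : ℝ → E} (hF : AEStronglyMeasurable F (volume.restrict (Ioi 0))) {C : ℝ}
    (hC : ∀ y, 0 < y → ‖F y‖ ≤ C * min 1 y) :
    IntegrableOn (fun y => levyTail φ y • F y) (Ioi 0) := by
  refine (hφ.integrableOn_min_mul_levyTail.const_mul C).mono'
    ((measurable_levyTail φ).aestronglyMeasurable.smul hF) ?_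
  refine (ae_restrict_iff' measurableSet_Ioi).2 (Eventually.of_forall fun y hy => ?_)
  rw [norm_smul, Real.norm_of_nonneg (levyTail_nonneg _ _)]
  calc levyTail φ y * ‖F y‖ ≤ levyTail φ y * (C * min 1 y) :=
        mul_le_mul_of_nonneg_left (hC y hy) (levyTail_nonneg _ _)
    _ = _ := by ring

theorem H0.norm_integral_mul_levyTail_le {E : Type*} [NormedAddCommGroup E] [NormedSpace ℝ E]
    (hφ : H0 φ) {F : ℝ → E} {C : ℝ} (hC : ∀ y, 0 < y → ‖F y‖ ≤ C * min 1 y) :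
    ‖∫ y in Ioi (0 : ℝ), levyTail φ y • F y‖
      ≤ C * ∫ y in Ioi (0 : ℝ), min 1 y * levyTail φ y := by
  rw [← integral_const_mul]
  refine norm_integral_le_of_norm_le (hφ.integrableOn_min_mul_levyTail.const_mul C) ?_
  refine (ae_restrict_iff' measurableSet_Ioi).2 (Eventually.of_forall fun y hy => ?_)
  rw [norm_smul, Real.norm_of_nonneg (levyTail_nonneg _ _)]
  calc levyTail φ y * ‖F y‖ ≤ levyTail φ y * (C * min 1 y) :=
        mul_le_mul_of_nonneg_left (hC y hy) (levyTail_nonneg _ _)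
    _ = _ := by ring

theorem H0.integral_mul_PhiFn {E : Type*} [NormedAddCommGroup E] [NormedSpace ℝ E]
    [CompleteSpace E] (hφ : H0 φ) {q : ℝ → E} {C : ℝ}
    (hqm : StronglyMeasurable q) (hq1 : ∀ a, 0 < a → ‖q a‖ ≤ C) (hqi : IntegrableOn q (Ioi 0)) :
    IntegrableOn (fun a => PhiFn φ a • q a) (Ioi 0) ∧
    ∫ a in Ioi (0 : ℝ), PhiFn φ a • q a
      = ∫ y in Ioi (0 : ℝ), levyTail φ y • ∫ a in (0 : ℝ)..y, q a := by
  set D := max C (∫ a in Ioi (0 : ℝ), ‖q a‖) with hD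
  let K : ℝ → ℝ → E := fun y a => (Iio y).indicator (fun a => levyTail φ y • q a) a
  have hKm : StronglyMeasurable (Function.uncurry K) := by
    have : Function.uncurry K = {p : ℝ × ℝ | p.2 < p.1}.indicator
        (fun p => levyTail φ p.1 • q p.2) := by
      ext ⟨y, a⟩
      simp [K, Function.uncurry, indicator_apply]
    rw [this]
    exact (((measurable_levyTail φ).comp measurable_fst).stronglyMeasurable.smul
      (hqm.comp_measurable measurable_snd)).indicator
        (measurableSet_lt measurable_snd measurable_fst)
  have hdom : ∀ y, 0 < y → ∫ a in Ioi (0 : ℝ), ‖(Iio y).indicator q a‖ ≤ D * min 1 y := by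
    intro y hy
    have h1 : ∫ a in Ioi (0 : ℝ), ‖(Iio y).indicator q a‖ = ∫ a in Ioo 0 y, ‖q a‖ := by
      simp_rw [norm_indicator_eq_indicator_norm]
      rw [setIntegral_indicator measurableSet_Iio]; rfl
    rw [h1]
    rcases le_total 1 y with h | h
    · rw [min_eq_left h, mul_one]
      exact (setIntegral_mono_set hqi.norm (Eventually.of_forall fun _ => norm_nonneg _)
        (Eventually.of_forall fun _ hx => hx.1)).trans (le_max_right _ _)
    · rw [min_eq_right h]
      have h2 := norm_setIntegral_le_of_norm_le_const (μ := volume) (s := Ioo 0 y)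
        (f := fun a => ‖q a‖) (C := C) (by simp) (fun a ha => by simpa using hq1 a ha.1)
      simp only [Measure.real, Real.volume_Ioo, sub_zero, ENNReal.toReal_ofReal hy.le] at h2
      exact (le_abs_self _).trans (h2.trans (mul_le_mul_of_nonneg_right (le_max_left _ _) hy.le))
  have hKeq : ∀ y, K y = fun a => levyTail φ y • (Iio y).indicator q a := by
    intro y; ext a; by_cases h : a < y <;> simp [K, h]
  have hKi : Integrable (Function.uncurry K)
      ((volume.restrict (Ioi (0 : ℝ))).prod (volume.restrict (Ioi (0 : ℝ)))) := by
    rw [integrable_prod_iff hKm.aestronglyMeasurable]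
    constructor
    · refine Eventually.of_forall fun y => ?_
      show Integrable (K y) _
      rw [hKeq]
      exact (hqi.indicator measurableSet_Iio).smul _
    · have h1 : (fun y => ∫ a in Ioi (0 : ℝ), ‖Function.uncurry K (y, a)‖)
          = fun y => levyTail φ y • ∫ a in Ioi (0 : ℝ), ‖(Iio y).indicator q a‖ := by
        ext y
        show ∫ a in Ioi (0 : ℝ), ‖K y a‖ = _
        simp_rw [hKeq, norm_smul, Real.norm_of_nonneg (levyTail_nonneg _ _)]
        rw [integral_const_mul]; rfl
      rw [h1]
      refine hφ.integrableOn_mul_levyTail (C := D) ?_ fun y hy => ?_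
      · have : StronglyMeasurable (Function.uncurry fun y a => ‖(Iio y).indicator q a‖) := by
          have : (Function.uncurry fun y a => ‖(Iio y).indicator q a‖) =
              fun p => ‖{p : ℝ × ℝ | p.2 < p.1}.indicator (fun p => q p.2) p‖ := by
            ext ⟨y, a⟩
            simp [Function.uncurry, indicator_apply]
          rw [this]
          exact ((hqm.comp_measurable measurable_snd).indicator
            (measurableSet_lt measurable_snd measurable_fst)).norm
        exact this.integral_prod_right.aestronglyMeasurable
      · rw [Real.norm_of_nonneg (integral_nonneg fun _ => norm_nonneg _)]
        exact hdom y hy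
  have hin : ∀ a, 0 < a → ∫ y in Ioi (0 : ℝ), K y a = PhiFn φ a • q a := by
    intro a ha
    have : (fun y => K y a) = (Ioi a).indicator fun y => levyTail φ y • q a := by
      ext y; by_cases h : a < y <;> simp [K, h]
    rw [this, setIntegral_indicator measurableSet_Ioi, PhiFn, if_pos ha, integral_smul_const,
      Ioi_inter_Ioi, sup_of_le_right ha.le]
  constructor
  · exact hKi.integral_prod_right.congr ((ae_restrict_iff' measurableSet_Ioi).2
      (Eventually.of_forall fun a ha => hin a ha))
  · rw [← setIntegral_congr_fun measurableSet_Ioi hin, ← integral_integral_swap hKi]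
    refine setIntegral_congr_fun measurableSet_Ioi fun y hy => ?_
    have hy' : (0 : ℝ) < y := hy
    simp only [hKeq]
    rw [integral_smul, setIntegral_indicator measurableSet_Iio,
      intervalIntegral.integral_of_le hy'.le, integral_Ioc_eq_integral_Ioo]; rfl

end LevyTail

section Symbol

variable {φ : Measure ℝ}

theorem norm_cexp_neg_mul_ofReal (ξ : ℂ) (y : ℝ) :
    ‖Complex.exp (-ξ * (y : ℂ))‖ = Real.exp (-(ξ.re * y)) := by
  rw [Complex.norm_exp]
  simp

theorem psiFn_div_eq_integral (hφ : H0 φ) {ξ : ℂ} (hξ : 0 < ξ.re) :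
    psiFn φ ξ / ξ = ∫ y in Ioi (0 : ℝ), levyTail φ y • (1 - Complex.exp (-ξ * (y : ℂ))) := by
  have h0 : ξ ≠ 0 := fun h => by simp [h] at hξ
  have hint : IntegrableOn (fun a : ℝ => Complex.exp (-ξ * (a : ℂ))) (Ioi 0) :=
    integrableOn_exp_mul_complex_Ioi (by simpa using hξ) 0
  have key := (hφ.integral_mul_PhiFn (q := fun a : ℝ => ξ * Complex.exp (-ξ * (a : ℂ))) (C := ‖ξ‖)
    (by fun_prop : Continuous _).stronglyMeasurable
    (fun a ha => by
      rw [norm_mul, norm_cexp_neg_mul_ofReal]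
      have : Real.exp (-(ξ.re * a)) ≤ 1 := Real.exp_le_one_iff.2 (by nlinarith)
      nlinarith [norm_nonneg ξ]) (hint.const_mul ξ)).2
  have h1 : psiFn φ ξ / ξ
      = ∫ a in Ioi (0 : ℝ), PhiFn φ a • (ξ * Complex.exp (-ξ * (a : ℂ))) := by
    rw [psiFn, sq, mul_assoc, mul_div_assoc, mul_div_cancel_left₀ _ h0]
    rw [← integral_const_mul]
    congr 1; ext a
    rw [Complex.real_smul]; ring
  rw [h1, key]
  refine setIntegral_congr_fun measurableSet_Ioi fun y _ => ?_
  rw [intervalIntegral.integral_const_mul, integral_exp_mul_complex (by simpa using h0)]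
  simp only [Complex.ofReal_zero, mul_zero, Complex.exp_zero]
  congr 1
  field_simp
  ring

theorem pow_succ_mul_exp_neg_le (j : ℕ) {c y : ℝ} (hc : 0 < c) (hy : 0 < y) :
    y ^ (j + 1) * Real.exp (-(c * y)) ≤
      max (j.factorial / c ^ j) ((j + 1).factorial / c ^ (j + 1)) * min 1 y := by
  have hb : ∀ i : ℕ, y ^ i * Real.exp (-(c * y)) ≤ i.factorial / c ^ i := by
    intro i
    have h1 := Real.pow_div_factorial_le_exp (c * y) (by positivity) i
    rw [Real.exp_neg, ← div_eq_mul_inv, div_le_div_iff₀ (Real.exp_pos _) (by positivity)]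
    rw [div_le_iff₀ (by positivity)] at h1
    calc y ^ i * c ^ i = (c * y) ^ i := by ring
      _ ≤ _ := h1
      _ = _ := by ring
  rcases le_total 1 y with h | h
  · rw [min_eq_left h, mul_one]
    exact (hb (j + 1)).trans (le_max_right _ _)
  · rw [min_eq_right h]
    calc y ^ (j + 1) * Real.exp (-(c * y)) = (y ^ j * Real.exp (-(c * y))) * y := by ring
      _ ≤ _ := mul_le_mul_of_nonneg_right ((hb j).trans (le_max_left _ _)) hy.le

theorem norm_pow_succ_mul_cexp_le (j : ℕ) {c y : ℝ} {ξ : ℂ} (hc : 0 < c) (hcξ : c ≤ ξ.re)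
    (hy : 0 < y) : ‖(y : ℂ) ^ (j + 1) * Complex.exp (-ξ * (y : ℂ))‖ ≤
      max (j.factorial / c ^ j) ((j + 1).factorial / c ^ (j + 1)) * min 1 y := by
  refine le_trans ?_ (pow_succ_mul_exp_neg_le j hc hy)
  rw [norm_mul, norm_cexp_neg_mul_ofReal, norm_pow, Complex.norm_real, Real.norm_of_nonneg hy.le]
  gcongr

theorem norm_one_sub_cexp_le {ξ : ℂ} (hξ : 0 < ξ.re) {y : ℝ} (hy : 0 < y) :
    ‖1 - Complex.exp (-ξ * (y : ℂ))‖ ≤ max 2 ‖ξ‖ * min 1 y := by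
  have hre : ∀ t : ℝ, 0 ≤ t → ‖Complex.exp (-ξ * (t : ℂ))‖ ≤ 1 := fun t ht => by
    rw [norm_cexp_neg_mul_ofReal]
    exact Real.exp_le_one_iff.2 (by nlinarith)
  rcases le_total 1 y with h | h
  · rw [min_eq_left h, mul_one]
    refine le_trans ((norm_sub_le _ _).trans ?_) (le_max_left _ _)
    rw [norm_one]
    linarith [hre y hy.le]
  · rw [min_eq_right h]
    have hd : ∀ t ∈ Icc (0 : ℝ) y, HasDerivWithinAt (fun t : ℝ => Complex.exp (-ξ * (t : ℂ)))
        (Complex.exp (-ξ * (t : ℂ)) * (-ξ * 1)) (Icc 0 y) t := fun t _ =>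
      (((Complex.ofRealCLM.hasDerivAt (x := t)).const_mul (-ξ)).cexp).hasDerivWithinAt
    have := (convex_Icc (0 : ℝ) y).norm_image_sub_le_of_norm_hasDerivWithin_le hd (C := ‖ξ‖)
      (fun t ht => by
        rw [norm_mul, mul_one, norm_neg]
        have := hre t ht.1
        nlinarith [norm_nonneg ξ]) (right_mem_Icc.2 hy.le) (left_mem_Icc.2 hy.le)
    simp only [Complex.ofReal_zero, mul_zero, Complex.exp_zero, zero_sub, norm_neg,
      Real.norm_of_nonneg hy.le] at this
    exact this.trans (mul_le_mul_of_nonneg_right (le_max_right _ _) hy.le)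

theorem H0.hasDerivAt_integral_levyTail (hφ : H0 φ) {F F' : ℂ → ℝ → ℂ} {ξ₀ : ℂ} (hξ₀ : 0 < ξ₀.re)
    (hFc : ∀ ξ, Continuous (F ξ)) (hFc' : ∀ ξ, Continuous (F' ξ))
    (hd : ∀ ξ y, HasDerivAt (fun ξ => F ξ y) (F' ξ y) ξ) {C₀ C : ℝ}
    (hC₀ : ∀ y, 0 < y → ‖F ξ₀ y‖ ≤ C₀ * min 1 y)
    (hC : ∀ ξ : ℂ, ξ₀.re / 2 ≤ ξ.re → ∀ y, 0 < y → ‖F' ξ y‖ ≤ C * min 1 y) :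
    HasDerivAt (fun ξ => ∫ y in Ioi (0 : ℝ), levyTail φ y • F ξ y)
      (∫ y in Ioi (0 : ℝ), levyTail φ y • F' ξ₀ y) ξ₀ := by
  have hs : {ξ : ℂ | ξ₀.re / 2 < ξ.re} ∈ 𝓝 ξ₀ :=
    (isOpen_lt continuous_const Complex.continuous_re).mem_nhds (by simp; linarith)
  refine (hasDerivAt_integral_of_dominated_loc_of_deriv_le hs (Eventually.of_forall fun ξ =>
    ((measurable_levyTail φ).smul (hFc ξ).measurable).aestronglyMeasurable)
    (hφ.integrableOn_mul_levyTail (hFc ξ₀).aestronglyMeasurable hC₀)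
    ((measurable_levyTail φ).smul (hFc' ξ₀).measurable).aestronglyMeasurable ?_
    (hφ.integrableOn_min_mul_levyTail.const_mul C)
    (Eventually.of_forall fun y ξ _ => (hd ξ y).const_smul (levyTail φ y))).2
  refine (ae_restrict_iff' measurableSet_Ioi).2 (Eventually.of_forall fun y hy ξ hξ => ?_)
  rw [norm_smul, Real.norm_of_nonneg (levyTail_nonneg _ _)]
  calc levyTail φ y * ‖F' ξ y‖ ≤ levyTail φ y * (C * min 1 y) :=
        mul_le_mul_of_nonneg_left (hC ξ (le_of_lt hξ) y hy) (levyTail_nonneg _ _)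
    _ = _ := by ring

theorem iteratedDeriv_psiFn_div (hφ : H0 φ) (j : ℕ) {ξ : ℂ} (hξ : 0 < ξ.re) :
    iteratedDeriv (j + 1) (fun ξ : ℂ => psiFn φ ξ / ξ) ξ
      = (-1) ^ j * ∫ y in Ioi (0 : ℝ),
          levyTail φ y • ((y : ℂ) ^ (j + 1) * Complex.exp (-ξ * (y : ℂ))) := by
  have hexp : ∀ (ξ : ℂ) (y : ℝ), HasDerivAt (fun ξ : ℂ => Complex.exp (-ξ * (y : ℂ)))
      (-((y : ℂ) * Complex.exp (-ξ * (y : ℂ)))) ξ := fun ξ y => by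
    convert! (((hasDerivAt_id ξ).neg).mul_const (y : ℂ)).cexp using 1
    simp; ring
  have hnear : ∀ {ξ : ℂ}, 0 < ξ.re → ∀ᶠ z : ℂ in 𝓝 ξ, 0 < z.re := fun h =>
    (isOpen_lt continuous_const Complex.continuous_re).mem_nhds h
  induction j generalizing ξ with
  | zero =>
    rw [zero_add, iteratedDeriv_one]
    have h1 := hφ.hasDerivAt_integral_levyTail hξ
      (F := fun ξ y => 1 - Complex.exp (-ξ * (y : ℂ)))
      (F' := fun ξ y => (y : ℂ) ^ (0 + 1) * Complex.exp (-ξ * (y : ℂ)))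
      (fun _ => by fun_prop) (fun _ => by fun_prop)
      (fun ξ y => by simpa using (hexp ξ y).const_sub 1)
      (fun y hy => norm_one_sub_cexp_le hξ hy)
      (fun z hz y hy => norm_pow_succ_mul_cexp_le 0 (half_pos hξ) hz hy)
    have h2 := h1.congr_of_eventuallyEq (f₁ := fun ξ : ℂ => psiFn φ ξ / ξ)
      ((hnear hξ).mono fun z hz => psiFn_div_eq_integral hφ hz)
    rw [h2.deriv]; simp
  | succ j ih =>
    rw [iteratedDeriv_succ]
    have h1 := hφ.hasDerivAt_integral_levyTail hξ
      (F := fun ξ y => (y : ℂ) ^ (j + 1) * Complex.exp (-ξ * (y : ℂ)))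
      (F' := fun ξ y => -((y : ℂ) ^ (j + 1 + 1) * Complex.exp (-ξ * (y : ℂ))))
      (fun _ => by fun_prop) (fun _ => by fun_prop)
      (fun ξ y => ((hexp ξ y).const_mul ((y : ℂ) ^ (j + 1))).congr_deriv (by ring))
      (fun y hy => norm_pow_succ_mul_cexp_le j hξ le_rfl hy)
      (fun z hz y hy => by
        rw [norm_neg]
        exact norm_pow_succ_mul_cexp_le (j + 1) (half_pos hξ) hz hy)
    have h2 := (h1.const_mul ((-1) ^ j)).congr_of_eventuallyEq
      (f₁ := iteratedDeriv (j + 1) (fun ξ : ℂ => psiFn φ ξ / ξ))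
      ((hnear hξ).mono fun z hz => ih hz)
    rw [h2.deriv]
    simp only [smul_neg]
    rw [integral_neg, pow_succ]
    ring

/-- The Poisson weight `e^{-t} t^j / j!`. -/
def poissonWeight (t : ℝ) (j : ℕ) : ℝ := Real.exp (-t) * (t ^ j / j.factorial)

theorem grunPsiM1_eq_integral (hφ : H0 φ) (j : ℕ) {h : ℝ} (hh : 0 < h) :
    grunPsiM1 φ j h
      = ∫ y in Ioi (0 : ℝ),
        levyTail φ y * ((if j = 0 then 1 else 0) - poissonWeight (y / h) j) := by
  have hre : (0 : ℝ) < ((1 : ℂ) / (h : ℂ)).re := by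
    rw [← Complex.ofReal_one, ← Complex.ofReal_div, Complex.ofReal_re]; positivity
  have hhc : (h : ℂ) ≠ 0 := by exact_mod_cast hh.ne'
  have hexp : ∀ y : ℝ, Complex.exp (-(1 / (h : ℂ)) * (y : ℂ))
      = ((Real.exp (-(y / h)) : ℝ) : ℂ) := by
    intro y; push_cast; congr 1; ring
  rw [grunPsiM1]
  cases j with
  | zero =>
    simp only [iteratedDeriv_zero]
    rw [psiFn_div_eq_integral hφ hre]
    have : (∫ y in Ioi (0 : ℝ), levyTail φ y • (1 - Complex.exp (-(1 / (h : ℂ)) * (y : ℂ))))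
        = ((∫ y in Ioi (0 : ℝ), levyTail φ y * (1 - poissonWeight (y / h) 0) : ℝ) : ℂ) := by
      rw [← integral_complex_ofReal]
      congr 1; ext y
      rw [hexp, Complex.real_smul, poissonWeight]; push_cast; simp
    rw [this]
    simp
  | succ j =>
    rw [iteratedDeriv_psiFn_div hφ j hre]
    have : (∫ y in Ioi (0 : ℝ), levyTail φ y •
          ((y : ℂ) ^ (j + 1) * Complex.exp (-(1 / (h : ℂ)) * (y : ℂ))))
        = (((j + 1).factorial * h ^ (j + 1) *
            ∫ y in Ioi (0 : ℝ), levyTail φ y * poissonWeight (y / h) (j + 1) : ℝ) : ℂ) := by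
      rw [← integral_const_mul, ← integral_complex_ofReal]
      congr 1; ext y
      rw [hexp, Complex.real_smul, poissonWeight, div_pow]; push_cast
      have : ((j + 1).factorial : ℂ) ≠ 0 := by exact_mod_cast (j + 1).factorial_ne_zero
      field_simp
    rw [this]
    have hsign : ((-1 : ℂ)) ^ (j + 1) * (-1) ^ j = -1 := by
      rw [pow_succ, mul_right_comm, ← mul_pow]; simp
    have h2 : ((-1 : ℂ) ^ (j + 1) / (((j + 1).factorial : ℂ) * (h : ℂ) ^ (j + 1))) *
        ((-1) ^ j * (((j + 1).factorial * h ^ (j + 1) *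
            ∫ y in Ioi (0 : ℝ), levyTail φ y * poissonWeight (y / h) (j + 1) : ℝ) : ℂ))
        = ((-∫ y in Ioi (0 : ℝ), levyTail φ y * poissonWeight (y / h) (j + 1) : ℝ) : ℂ) := by
      push_cast
      have : ((j + 1).factorial : ℂ) ≠ 0 := by exact_mod_cast (j + 1).factorial_ne_zero
      rw [div_mul_eq_mul_div, ← mul_assoc, hsign]
      field_simp
    rw [h2, Complex.ofReal_re, ← integral_neg]
    simp

end Symbol

section Renewal

variable {φ : Measure ℝ} {k : ℝ → ℝ}

/-- The measure `e^{-x} w(x) dx` on `(0, ∞)`. -/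
def dampedMeasure (w : ℝ → ℝ) : Measure ℝ :=
  (volume.restrict (Ioi 0)).withDensity fun x => ENNReal.ofReal (Real.exp (-x) * w x)

theorem isFiniteMeasure_dampedMeasure {w : ℝ → ℝ}
    (hwi : IntegrableOn (fun x => Real.exp (-x) * w x) (Ioi 0)) :
    IsFiniteMeasure (dampedMeasure w) :=
  isFiniteMeasure_withDensity_ofReal hwi.2

theorem toReal_smul_ae_eq_exp_mul_smul {E : Type*} [NormedAddCommGroup E] [NormedSpace ℝ E]
    {w : ℝ → ℝ} (hw : ∀ x, 0 < x → 0 ≤ w x) (F : ℝ → E) :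
    (fun x => (ENNReal.ofReal (Real.exp (-x) * w x)).toReal • F x)
      =ᵐ[volume.restrict (Ioi 0)] fun x => (Real.exp (-x) * w x) • F x :=
  (ae_restrict_iff' measurableSet_Ioi).2 (Eventually.of_forall fun x hx => by
    simp only [ENNReal.toReal_ofReal (mul_nonneg (Real.exp_pos _).le (hw x hx))])

theorem integral_dampedMeasure {E : Type*} [NormedAddCommGroup E] [NormedSpace ℝ E]
    {w : ℝ → ℝ} (hw : ∀ x, 0 < x → 0 ≤ w x)
    (hwi : IntegrableOn (fun x => Real.exp (-x) * w x) (Ioi 0)) (F : ℝ → E) :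
    ∫ x, F x ∂(dampedMeasure w) = ∫ x in Ioi (0 : ℝ), (Real.exp (-x) * w x) • F x := by
  rw [dampedMeasure, integral_withDensity_eq_integral_toReal_smul₀
    hwi.1.aemeasurable.ennreal_ofReal (Eventually.of_forall fun _ => ENNReal.ofReal_lt_top)]
  exact integral_congr_ae (toReal_smul_ae_eq_exp_mul_smul hw F)

theorem integrable_dampedMeasure_iff {E : Type*} [NormedAddCommGroup E] [NormedSpace ℝ E]
    {w : ℝ → ℝ} (hw : ∀ x, 0 < x → 0 ≤ w x)
    (hwi : IntegrableOn (fun x => Real.exp (-x) * w x) (Ioi 0)) (F : ℝ → E) :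
    Integrable F (dampedMeasure w) ↔
      IntegrableOn (fun x => (Real.exp (-x) * w x) • F x) (Ioi 0) := by
  rw [dampedMeasure, integrable_withDensity_iff_integrable_smul₀'
    hwi.1.aemeasurable.ennreal_ofReal (Eventually.of_forall fun _ => ENNReal.ofReal_lt_top)]
  exact integrable_congr (toReal_smul_ae_eq_exp_mul_smul hw F)

theorem charFun_dampedMeasure {w : ℝ → ℝ} (hw : ∀ x, 0 < x → 0 ≤ w x)
    (hwi : IntegrableOn (fun x => Real.exp (-x) * w x) (Ioi 0)) (t : ℝ) :
    charFun (dampedMeasure w) t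
      = ∫ x in Ioi (0 : ℝ), Complex.exp (-(1 - t * Complex.I) * (x : ℂ)) * (w x : ℂ) := by
  rw [charFun_apply_real, integral_dampedMeasure hw hwi]
  congr 1; ext x
  rw [Complex.real_smul]; push_cast
  rw [mul_right_comm, ← Complex.exp_add]
  congr 2; ring

theorem PhiFn_nonneg (φ : Measure ℝ) (x : ℝ) : 0 ≤ PhiFn φ x := by
  rw [PhiFn]; split_ifs
  · exact integral_nonneg fun y => levyTail_nonneg _ _
  · exact le_rfl

theorem integrableOn_exp_neg_Ioi_zero : IntegrableOn (fun x : ℝ => Real.exp (-x)) (Ioi 0) := by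
  simpa using integrableOn_exp_neg_Ioi 0

theorem H0.integrableOn_exp_mul_PhiFn (hφ : H0 φ) :
    IntegrableOn (fun x => Real.exp (-x) * PhiFn φ x) (Ioi 0) := by
  refine ((hφ.integral_mul_PhiFn (q := fun x : ℝ => Real.exp (-x)) (C := 1)
    (by fun_prop : Continuous _).stronglyMeasurable (fun a ha => ?_)
    integrableOn_exp_neg_Ioi_zero).1).congr (Eventually.of_forall fun x => ?_)
  · rw [Real.norm_of_nonneg (Real.exp_pos _).le]
    exact Real.exp_le_one_iff.2 (by linarith)
  · simp [mul_comm]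

theorem IsScaleKernel.nonneg (hk : IsScaleKernel φ k) {x : ℝ} (hx : 0 < x) : 0 ≤ k (x - 1) :=
  hk.2.1 _ (by linarith)

theorem IsScaleKernel.integrableOn_exp_mul (hk : IsScaleKernel φ k) :
    IntegrableOn (fun x => Real.exp (-x) * k (x - 1)) (Ioi 0) := by
  refine (hk.2.2.2.2.2 1 (by simp)).1.re.congr (Eventually.of_forall fun x => ?_)
  have : Complex.exp (-1 * (x : ℂ)) * (k (x - 1) : ℂ)
      = ((Real.exp (-x) * k (x - 1) : ℝ) : ℂ) := by push_cast; simp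
  simp only [this]
  exact Complex.ofReal_re _

theorem IsScaleKernel.integrableOn_Ioc (hk : IsScaleKernel φ k) (T : ℝ) :
    IntegrableOn (fun x => k (x - 1)) (Ioc 0 T) := by
  have h1 : IntegrableOn (fun x => Real.exp (-x) * k (x - 1)) (Ioc 0 T) :=
    hk.integrableOn_exp_mul.mono_set Ioc_subset_Ioi_self
  refine (h1.bdd_mul (c := Real.exp T) (f := fun x => Real.exp x)
    (by fun_prop : Continuous _).aestronglyMeasurable ?_).congr (Eventually.of_forall fun x => ?_)
  · refine (ae_restrict_iff' measurableSet_Ioc).2 (Eventually.of_forall fun x hx => ?_)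
    rw [Real.norm_of_nonneg (Real.exp_pos _).le]
    exact Real.exp_le_exp.2 hx.2
  · simp only
    rw [← mul_assoc, ← Real.exp_add]; simp

theorem psiFn_ne_zero (hφ : H0 φ) {ξ : ℂ} (hξ : 0 < ξ.re) : psiFn φ ξ ≠ 0 := by
  intro h0
  have h1 := psiFn_div_eq_integral hφ hξ
  rw [h0, zero_div] at h1
  have hi : IntegrableOn (fun y : ℝ => levyTail φ y • (1 - Complex.exp (-ξ * (y : ℂ)))) (Ioi 0) :=
    hφ.integrableOn_mul_levyTail (by fun_prop : Continuous _).aestronglyMeasurable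
      fun y hy => norm_one_sub_cexp_le hξ hy
  have h2 : ∫ y in Ioi (0 : ℝ), (levyTail φ y • (1 - Complex.exp (-ξ * (y : ℂ)))).re = 0 := by
    have := integral_re hi
    simp only [RCLike.re_to_complex] at this
    rw [this, ← h1]; rfl
  have hre : ∀ y : ℝ, 0 < y → 0 < (1 - Complex.exp (-ξ * (y : ℂ))).re := fun y hy => by
    have h3 := Complex.re_le_norm (Complex.exp (-ξ * (y : ℂ)))
    rw [norm_cexp_neg_mul_ofReal] at h3
    have h4 : Real.exp (-(ξ.re * y)) < 1 := by
      rw [Real.exp_lt_one_iff]; nlinarith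
    rw [Complex.sub_re, Complex.one_re]; linarith
  obtain ⟨y₀, hy₀, hn⟩ := hφ.exists_levyTail_pos
  have h5 : 0 < ∫ y in Ioi (0 : ℝ), (levyTail φ y • (1 - Complex.exp (-ξ * (y : ℂ)))).re := by
    have hir : IntegrableOn (fun y : ℝ => (levyTail φ y • (1 - Complex.exp (-ξ * (y : ℂ)))).re)
      (Ioi 0) := hi.re
    rw [setIntegral_pos_iff_support_of_nonneg_ae _ hir]
    · refine lt_of_lt_of_le ?_ (measure_mono (s := Ioo 0 y₀) fun y hy => ⟨?_, hy.1⟩)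
      · simpa using hy₀
      · simp only [Function.mem_support, Complex.smul_re, smul_eq_mul]
        have h6 : levyTail φ y₀ ≤ levyTail φ y :=
          hφ.levyTail_antitoneOn (mem_Ioi.2 hy.1) (mem_Ioi.2 hy₀) hy.2.le
        exact (mul_pos (hn.trans_le h6) (hre y hy.1)).ne'
    · refine (ae_restrict_iff' measurableSet_Ioi).2 (Eventually.of_forall fun y hy => ?_)
      simp only [Complex.smul_re, smul_eq_mul, Pi.zero_apply]
      exact mul_nonneg (levyTail_nonneg _ _) (hre y hy).le
  exact h5.ne' h2

theorem conv_dampedMeasure_eq (hφ : H0 φ) (hk : IsScaleKernel φ k) :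
    (dampedMeasure fun x => k (x - 1)).conv (dampedMeasure (PhiFn φ))
      = dampedMeasure fun _ => 1 := by
  have hone : IntegrableOn (fun x : ℝ => Real.exp (-x) * (fun _ => (1 : ℝ)) x) (Ioi 0) := by
    simpa using integrableOn_exp_neg_Ioi_zero
  have hkn : ∀ x, 0 < x → 0 ≤ (fun x => k (x - 1)) x := fun x hx => hk.nonneg hx
  have := isFiniteMeasure_dampedMeasure hk.integrableOn_exp_mul
  have := isFiniteMeasure_dampedMeasure hφ.integrableOn_exp_mul_PhiFn
  have := isFiniteMeasure_dampedMeasure hone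
  refine Measure.ext_of_charFun (funext fun t => ?_)
  rw [charFun_conv, charFun_dampedMeasure hkn hk.integrableOn_exp_mul,
    charFun_dampedMeasure (fun x _ => PhiFn_nonneg φ x) hφ.integrableOn_exp_mul_PhiFn,
    charFun_dampedMeasure (fun _ _ => zero_le_one) hone]
  set ξ : ℂ := 1 - t * Complex.I with hξ
  have hre : 0 < ξ.re := by simp [hξ]
  have h0 : ξ ≠ 0 := fun h => by simp [h] at hre
  have hψ := psiFn_ne_zero hφ hre
  have hΦ : ∫ x in Ioi (0 : ℝ), Complex.exp (-ξ * (x : ℂ)) * (PhiFn φ x : ℂ)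
      = psiFn φ ξ / ξ ^ 2 := by
    rw [psiFn, mul_div_cancel_left₀ _ (pow_ne_zero 2 h0)]
  rw [(hk.2.2.2.2.2 ξ hre).2, hΦ]
  simp only [Complex.ofReal_one, mul_one]
  rw [integral_exp_mul_complex_Ioi (by simpa using hre)]
  simp only [Complex.ofReal_zero, mul_zero, Complex.exp_zero]
  field_simp

/-- The scale kernel and `Φ` are convolution inverses, tested against a function `G`. -/
theorem renewal_identity (hφ : H0 φ) (hk : IsScaleKernel φ k) {G : ℝ → ℝ} {x : ℝ}
    (hG : IntegrableOn (fun s => G (x - s)) (Ioi 0)) :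
    IntegrableOn (fun b => k (b - 1) * ∫ a in Ioi (0 : ℝ), PhiFn φ a * G (x - b - a)) (Ioi 0) ∧
    ∫ b in Ioi (0 : ℝ), k (b - 1) * ∫ a in Ioi (0 : ℝ), PhiFn φ a * G (x - b - a)
      = ∫ s in Ioi (0 : ℝ), G (x - s) := by
  have hone : IntegrableOn (fun x : ℝ => Real.exp (-x) * (fun _ => (1 : ℝ)) x) (Ioi 0) := by
    simpa using integrableOn_exp_neg_Ioi_zero
  have hkn : ∀ x, 0 < x → 0 ≤ (fun x => k (x - 1)) x := fun x hx => hk.nonneg hx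
  have := isFiniteMeasure_dampedMeasure hk.integrableOn_exp_mul
  have := isFiniteMeasure_dampedMeasure hφ.integrableOn_exp_mul_PhiFn
  set F : ℝ → ℝ := fun s => Real.exp s * G (x - s) with hF
  have hexp : ∀ s : ℝ, (Real.exp (-s) * 1) • F s = G (x - s) := fun s => by
    rw [hF, smul_eq_mul, mul_one, ← mul_assoc, ← Real.exp_add]; simp
  have hFi : Integrable F ((dampedMeasure fun x => k (x - 1)).conv (dampedMeasure (PhiFn φ))) := by
    rw [conv_dampedMeasure_eq hφ hk, integrable_dampedMeasure_iff (fun _ _ => zero_le_one) hone]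
    simpa only [hexp] using hG
  have hint := integral_conv hFi
  rw [conv_dampedMeasure_eq hφ hk, integral_dampedMeasure (fun _ _ => zero_le_one) hone] at hint
  simp only [hexp] at hint
  have hinner : ∀ b, ∫ a, F (b + a) ∂(dampedMeasure (PhiFn φ))
      = Real.exp b * ∫ a in Ioi (0 : ℝ), PhiFn φ a * G (x - b - a) := by
    intro b
    rw [integral_dampedMeasure (fun x _ => PhiFn_nonneg φ x) hφ.integrableOn_exp_mul_PhiFn,
      ← integral_const_mul]
    congr 1; ext a
    have : Real.exp (-a) * Real.exp a = 1 := by rw [← Real.exp_add]; simp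
    simp only [hF]
    rw [smul_eq_mul, Real.exp_add, sub_add_eq_sub_sub]
    linear_combination (PhiFn φ a * Real.exp b * G (x - b - a)) * this
  have houter : ∀ b c : ℝ, (Real.exp (-b) * k (b - 1)) • (Real.exp b * c) = k (b - 1) * c := by
    intro b c
    have : Real.exp (-b) * Real.exp b = 1 := by rw [← Real.exp_add]; simp
    rw [smul_eq_mul]
    linear_combination (k (b - 1) * c) * this
  have hprod := (integrable_map_measure hFi.1 (by fun_prop)).1 hFi
  have hout := hprod.integral_prod_left
  simp only [Function.comp_apply, hinner] at hout hint
  rw [integrable_dampedMeasure_iff hkn hk.integrableOn_exp_mul] at hout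
  rw [integral_dampedMeasure hkn hk.integrableOn_exp_mul] at hint
  simp only [houter] at hout hint
  exact ⟨hout, hint.symm⟩

end Renewal

section Poisson

theorem poissonWeight_nonneg {t : ℝ} (ht : 0 ≤ t) (j : ℕ) : 0 ≤ poissonWeight t j := by
  unfold poissonWeight; positivity

theorem hasSum_poissonWeight (t : ℝ) : HasSum (poissonWeight t) 1 := by
  have h := (NormedSpace.expSeries_div_hasSum_exp (𝔸 := ℝ) t).mul_left (Real.exp (-t))
  rw [← Real.exp_eq_exp_ℝ, ← Real.exp_add] at h
  show HasSum (fun i : ℕ => Real.exp (-t) * (t ^ i / i.factorial)) 1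
  simpa using h

theorem hasSum_of_eq {a b : ℕ → ℝ} {S T : ℝ} (h : HasSum a S) (hab : ∀ j, b j = a j)
    (hST : T = S) : HasSum b T := by
  rw [hST, funext hab]; exact h

theorem hasSum_poissonWeight_mul_cast {t : ℝ} {a : ℕ → ℝ} {S : ℝ}
    (h : HasSum (fun j => poissonWeight t j * a (j + 1)) S) :
    HasSum (fun j => poissonWeight t j * (j * a j)) (t * S) := by
  rw [← hasSum_nat_add_iff' 1]
  simp only [Finset.range_one, Finset.sum_singleton, Nat.cast_zero, zero_mul, mul_zero, sub_zero]
  refine (h.mul_left t).congr_fun ?_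
  intro j
  rw [poissonWeight, poissonWeight, Nat.factorial_succ]
  push_cast
  field_simp
  ring

theorem hasSum_poissonWeight_pow_one (t : ℝ) :
    HasSum (fun j : ℕ => poissonWeight t j * (j : ℝ)) t := by
  simpa using hasSum_poissonWeight_mul_cast (a := fun _ => 1) (S := 1)
    (by simpa using hasSum_poissonWeight t)

theorem hasSum_poissonWeight_pow_two (t : ℝ) :
    HasSum (fun j : ℕ => poissonWeight t j * (j : ℝ) ^ 2) (t * (t + 1)) := by
  have h := hasSum_poissonWeight_mul_cast (t := t) (a := fun j => (j : ℝ)) (S := t + 1)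
    (hasSum_of_eq ((hasSum_poissonWeight_pow_one t).add (hasSum_poissonWeight t))
      (fun j => by push_cast; ring) (by ring))
  exact hasSum_of_eq h (fun j => by ring) (by ring)

theorem hasSum_poissonWeight_pow_three (t : ℝ) :
    HasSum (fun j : ℕ => poissonWeight t j * (j : ℝ) ^ 3) (t * (t ^ 2 + 3 * t + 1)) := by
  have h := hasSum_poissonWeight_mul_cast (t := t) (a := fun j => (j : ℝ) ^ 2)
    (S := t * (t + 1) + 2 * t + 1)
    (hasSum_of_eq (((hasSum_poissonWeight_pow_two t).add
      ((hasSum_poissonWeight_pow_one t).mul_left 2)).add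
      (hasSum_poissonWeight t))
      (fun j => by push_cast; ring) (by ring))
  exact hasSum_of_eq h (fun j => by ring) (by ring)

theorem hasSum_poissonWeight_pow_four (t : ℝ) :
    HasSum (fun j : ℕ => poissonWeight t j * (j : ℝ) ^ 4)
      (t * (t ^ 3 + 6 * t ^ 2 + 7 * t + 1)) := by
  have h := hasSum_poissonWeight_mul_cast (t := t) (a := fun j => (j : ℝ) ^ 3)
    (S := t * (t ^ 2 + 3 * t + 1) + 3 * (t * (t + 1)) + 3 * t + 1)
    (hasSum_of_eq ((((hasSum_poissonWeight_pow_three t).add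
      ((hasSum_poissonWeight_pow_two t).mul_left 3)).add
      ((hasSum_poissonWeight_pow_one t).mul_left 3)).add (hasSum_poissonWeight t))
      (fun j => by push_cast; ring) (by ring))
  exact hasSum_of_eq h (fun j => by ring) (by ring)

variable {h y : ℝ}

theorem hasSum_poissonWeight_central_one (hh : 0 < h) :
    HasSum (fun j : ℕ => poissonWeight (y / h) j * (j * h - y)) 0 := by
  exact hasSum_of_eq (((hasSum_poissonWeight_pow_one (y / h)).mul_left h).sub
    ((hasSum_poissonWeight (y / h)).mul_left y))
    (fun j => by ring) (by field_simp; ring)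

theorem hasSum_poissonWeight_central_two (hh : 0 < h) :
    HasSum (fun j : ℕ => poissonWeight (y / h) j * (j * h - y) ^ 2) (h * y) := by
  exact hasSum_of_eq ((((hasSum_poissonWeight_pow_two (y / h)).mul_left (h ^ 2)).sub
    ((hasSum_poissonWeight_pow_one (y / h)).mul_left (2 * h * y))).add
    ((hasSum_poissonWeight (y / h)).mul_left (y ^ 2)))
    (fun j => by ring) (by field_simp; ring)

theorem hasSum_poissonWeight_central_three (hh : 0 < h) :
    HasSum (fun j : ℕ => poissonWeight (y / h) j * (j * h - y) ^ 3) (h ^ 2 * y) := by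
  exact hasSum_of_eq (((((hasSum_poissonWeight_pow_three (y / h)).mul_left (h ^ 3)).sub
    ((hasSum_poissonWeight_pow_two (y / h)).mul_left (3 * h ^ 2 * y))).add
    ((hasSum_poissonWeight_pow_one (y / h)).mul_left (3 * h * y ^ 2))).sub
    ((hasSum_poissonWeight (y / h)).mul_left (y ^ 3)))
    (fun j => by ring) (by field_simp; ring)

theorem hasSum_poissonWeight_central_four (hh : 0 < h) :
    HasSum (fun j : ℕ => poissonWeight (y / h) j * (j * h - y) ^ 4)
      (h ^ 3 * y + 3 * h ^ 2 * y ^ 2) := by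
  exact hasSum_of_eq ((((((hasSum_poissonWeight_pow_four (y / h)).mul_left (h ^ 4)).sub
    ((hasSum_poissonWeight_pow_three (y / h)).mul_left (4 * h ^ 3 * y))).add
    ((hasSum_poissonWeight_pow_two (y / h)).mul_left (6 * h ^ 2 * y ^ 2))).sub
    ((hasSum_poissonWeight_pow_one (y / h)).mul_left (4 * h * y ^ 3))).add
    ((hasSum_poissonWeight (y / h)).mul_left (y ^ 4)))
    (fun j => by ring) (by field_simp; ring)

theorem poissonWeight_le_one {t : ℝ} (ht : 0 ≤ t) (j : ℕ) : poissonWeight t j ≤ 1 :=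
  le_hasSum (hasSum_poissonWeight t) j fun i _ => poissonWeight_nonneg ht i

theorem poissonWeight_succ_le {t : ℝ} (ht : 0 ≤ t) (j : ℕ) : poissonWeight t (j + 1) ≤ t := by
  have h1 : poissonWeight t (j + 1) = t / (j + 1) * poissonWeight t j := by
    rw [poissonWeight, poissonWeight, Nat.factorial_succ]; push_cast
    field_simp
    ring
  rw [h1]
  have h2 : t / ((j : ℝ) + 1) ≤ t := div_le_self ht (by linarith [(j.cast_nonneg : (0 : ℝ) ≤ j)])
  calc t / ((j : ℝ) + 1) * poissonWeight t j ≤ t * 1 :=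
        mul_le_mul h2 (poissonWeight_le_one ht j) (poissonWeight_nonneg ht j) ht
    _ = t := mul_one t

theorem continuous_poissonWeight_div (h : ℝ) (j : ℕ) :
    Continuous fun y : ℝ => poissonWeight (y / h) j := by
  unfold poissonWeight; fun_prop

theorem norm_ite_sub_poissonWeight_le (hh : 0 < h) (hy : 0 < y) (j : ℕ) :
    ‖(if j = 0 then 1 else 0) - poissonWeight (y / h) j‖ ≤ max 1 (1 / h) * min 1 y := by
  have ht : 0 ≤ y / h := by positivity
  have key : ‖(if j = 0 then 1 else 0) - poissonWeight (y / h) j‖ ≤ min 1 (y / h) := by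
    cases j with
    | zero =>
      have h1 : poissonWeight (y / h) 0 = Real.exp (-(y / h)) := by simp [poissonWeight]
      have h2 : Real.exp (-(y / h)) ≤ 1 := Real.exp_le_one_iff.2 (by linarith)
      rw [if_pos rfl, h1, Real.norm_of_nonneg (by linarith)]
      refine le_min (by linarith [Real.exp_pos (-(y / h))]) ?_
      linarith [Real.add_one_le_exp (-(y / h))]
    | succ j =>
      rw [if_neg j.succ_ne_zero, zero_sub, norm_neg,
        Real.norm_of_nonneg (poissonWeight_nonneg ht _)]
      exact le_min (poissonWeight_le_one ht _) (poissonWeight_succ_le ht _)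
  refine key.trans ?_
  rcases le_total 1 y with h1 | h1
  · rw [min_eq_left h1, mul_one]
    exact (min_le_left _ _).trans (le_max_left _ _)
  · rw [min_eq_right h1]
    refine (min_le_right _ _).trans ?_
    calc y / h = 1 / h * y := by ring
      _ ≤ _ := mul_le_mul_of_nonneg_right (le_max_right _ _) hy.le

end Poisson

section Taylor

/-- A chain of four successive derivatives of functions vanishing on `(-∞, -1]` and bounded on
`(-∞, 1]`. -/
structure IsCausalChain (f : ℕ → ℝ → ℝ) (M : ℝ) : Prop where
  hasDerivAt : ∀ i < 4, ∀ x, HasDerivAt (f i) (f (i + 1) x) x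
  eq_zero : ∀ i ≤ 4, ∀ x ≤ -1, f i x = 0
  abs_le : ∀ i ≤ 4, ∀ x ≤ 1, |f i x| ≤ M

theorem abs_le_mul_abs_sub_pow_succ {R r : ℝ → ℝ} {a b c M : ℝ} (n : ℕ) (hM : 0 ≤ M)
    (hd : ∀ t, HasDerivAt R (r t) t) (hR : R a = 0) (ha : a ≤ c) (hb : b ≤ c)
    (hr : ∀ t ≤ c, |r t| ≤ M * |t - a| ^ n) : |R b| ≤ M * |b - a| ^ (n + 1) := by
  have key := (convex_uIcc a b).norm_image_sub_le_of_norm_hasDerivWithin_le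
    (fun t _ => (hd t).hasDerivWithinAt) (C := M * |b - a| ^ n) (fun t ht => ?_)
    left_mem_uIcc right_mem_uIcc
  · rw [hR, sub_zero, Real.norm_eq_abs, Real.norm_eq_abs] at key
    rw [pow_succ, ← mul_assoc]; exact key
  · refine (hr t (ht.2.trans (max_le ha hb))).trans ?_
    exact mul_le_mul_of_nonneg_left
      (pow_le_pow_left₀ (abs_nonneg _) (abs_sub_left_of_mem_uIcc ht) n) hM

variable {f : ℕ → ℝ → ℝ} {M : ℝ}

theorem IsCausalChain.nonneg (hf : IsCausalChain f M) : 0 ≤ M :=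
  (abs_nonneg _).trans (hf.abs_le 0 (by norm_num) 0 zero_le_one)

theorem IsCausalChain.continuous (hf : IsCausalChain f M) {i : ℕ} (hi : i < 4) :
    Continuous (f i) :=
  continuous_iff_continuousAt.2 fun x => (hf.hasDerivAt i hi x).continuousAt

theorem IsCausalChain.abs_taylor_le (hf : IsCausalChain f M) {a b : ℝ} (ha : a ≤ 1) (hb : b ≤ 1) :
    |f 0 b - f 0 a - f 1 a * (b - a) - f 2 a / 2 * (b - a) ^ 2 - f 3 a / 6 * (b - a) ^ 3|
      ≤ M * (b - a) ^ 4 := by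
  have hM := hf.nonneg
  have hid : ∀ t : ℝ, HasDerivAt (fun t => t - a) 1 t := fun t => (hasDerivAt_id t).sub_const a
  have h3 : ∀ t ≤ 1, |f 3 t - f 3 a| ≤ M * |t - a| ^ 1 := fun t ht =>
    abs_le_mul_abs_sub_pow_succ (R := fun t => f 3 t - f 3 a) 0 hM
      (fun t => (hf.hasDerivAt 3 (by norm_num) t).sub_const _) (by simp) ha ht
      (fun t ht => by simpa using hf.abs_le 4 le_rfl t ht)
  have h2 : ∀ t ≤ 1, |f 2 t - f 2 a - f 3 a * (t - a)| ≤ M * |t - a| ^ 2 := fun t ht =>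
    abs_le_mul_abs_sub_pow_succ (R := fun t => f 2 t - f 2 a - f 3 a * (t - a)) 1 hM
      (fun t => (((hf.hasDerivAt 2 (by norm_num) t).sub_const _).sub
        ((hid t).const_mul (f 3 a))).congr_deriv (by ring)) (by simp) ha ht h3
  have h1 : ∀ t ≤ 1, |f 1 t - f 1 a - f 2 a * (t - a) - f 3 a / 2 * (t - a) ^ 2|
      ≤ M * |t - a| ^ 3 := fun t ht =>
    abs_le_mul_abs_sub_pow_succ
      (R := fun t => f 1 t - f 1 a - f 2 a * (t - a) - f 3 a / 2 * (t - a) ^ 2) 2 hM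
      (fun t => ((((hf.hasDerivAt 1 (by norm_num) t).sub_const _).sub
        ((hid t).const_mul (f 2 a))).sub (((hid t).pow 2).const_mul (f 3 a / 2))).congr_deriv
        (by push_cast; ring)) (by simp) ha ht h2
  have h0 := abs_le_mul_abs_sub_pow_succ
      (R := fun t => f 0 t - f 0 a - f 1 a * (t - a) - f 2 a / 2 * (t - a) ^ 2
        - f 3 a / 6 * (t - a) ^ 3) 3 hM
      (fun t => (((((hf.hasDerivAt 0 (by norm_num) t).sub_const _).sub
        ((hid t).const_mul (f 1 a))).sub (((hid t).pow 2).const_mul (f 2 a / 2))).sub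
        (((hid t).pow 3).const_mul (f 3 a / 6))).congr_deriv
        (by push_cast; ring)) (by simp) ha hb h1
  simpa [Even.pow_abs (show Even 4 by decide)] using h0

theorem IsCausalChain.hasSum_poissonWeight (hf : IsCausalChain f M) {s h : ℝ} (hs : s ≤ 1) {N : ℕ}
    (hh : 0 < h) (hN : 2 ≤ N * h) (t : ℝ) :
    HasSum (fun j : ℕ => poissonWeight t j * f 0 (s - j * h))
      (∑ j ∈ Finset.range N, poissonWeight t j * f 0 (s - j * h)) := by
  refine hasSum_sum_of_ne_finset_zero fun j hj => ?_
  have hj' : (N : ℝ) ≤ j := by exact_mod_cast not_lt.1 (by simpa using hj)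
  rw [hf.eq_zero 0 (by norm_num) _ (by nlinarith), mul_zero]

/-- The second-order consistency estimate for the Poisson approximation of a translation. -/
theorem IsCausalChain.abs_poisson_sub_le (hf : IsCausalChain f M) {s h y : ℝ} (hs : s ≤ 1) {N : ℕ}
    (hh : 0 < h) (hh1 : h ≤ 1) (hN : 2 ≤ N * h) (hy : 0 < y) :
    |(∑ j ∈ Finset.range N, poissonWeight (y / h) j * f 0 (s - j * h)) - f 0 (s - y)
      - h * (y * f 2 (s - y) / 2)| ≤ 40 * M * h ^ 2 * min 1 y := by
  have hM := hf.nonneg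
  have hsum := hf.hasSum_poissonWeight hs hh hN (y / h)
  have ht : 0 ≤ y / h := by positivity
  rcases le_or_gt y 3 with hy3 | hy3
  · have ha : s - y ≤ 1 := by linarith
    set a := s - y with ha_def
    have hR := hsum.sub ((((_root_.hasSum_poissonWeight (y / h)).mul_left (f 0 a)).sub
      ((hasSum_poissonWeight_central_one (y := y) hh).mul_left (f 1 a))).add
      ((hasSum_poissonWeight_central_two (y := y) hh).mul_left (f 2 a / 2)) |>.sub
      ((hasSum_poissonWeight_central_three (y := y) hh).mul_left (f 3 a / 6)))
    have hb := (hasSum_poissonWeight_central_four (y := y) hh).mul_left M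
    have hbound := hR.norm_le_of_bounded hb fun j => by
      have hj : (0 : ℝ) ≤ j * h := by positivity
      have h1 := hf.abs_taylor_le ha (b := s - j * h) (by linarith)
      have h2 : s - j * h - a = -(j * h - y) := by rw [ha_def]; ring
      rw [h2] at h1
      have h3 := mul_le_mul_of_nonneg_left h1 (poissonWeight_nonneg ht j)
      rw [Real.norm_eq_abs]
      rw [← abs_of_nonneg (poissonWeight_nonneg ht j), ← abs_mul,
        abs_of_nonneg (poissonWeight_nonneg ht j)] at h3
      refine (le_of_eq ?_).trans (h3.trans (le_of_eq ?_))
      · congr 1; ring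
      · ring
    rw [Real.norm_eq_abs] at hbound
    have hmin : y ≤ 3 * min 1 y := by
      rcases le_total 1 y with h1 | h1
      · rw [min_eq_left h1]; linarith
      · rw [min_eq_right h1]; linarith
    have hfin : |(∑ j ∈ Finset.range N, poissonWeight (y / h) j * f 0 (s - j * h)) - f 0 a
        - h * (y * f 2 a / 2)| ≤ M * (h ^ 3 * y + 3 * h ^ 2 * y ^ 2) + M * (h ^ 2 * y) / 6 := by
      have e : (∑ j ∈ Finset.range N, poissonWeight (y / h) j * f 0 (s - j * h)) - f 0 a
          - h * (y * f 2 a / 2) = ((∑ j ∈ Finset.range N, poissonWeight (y / h) j * f 0 (s - j * h))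
          - (f 0 a * 1 - f 1 a * 0 + f 2 a / 2 * (h * y) - f 3 a / 6 * (h ^ 2 * y)))
          + -(f 3 a / 6 * (h ^ 2 * y)) := by ring
      rw [e]
      refine (abs_add_le _ _).trans (add_le_add hbound ?_)
      rw [abs_neg, abs_mul, abs_div, abs_of_nonneg (show 0 ≤ h ^ 2 * y by positivity)]
      have := hf.abs_le 3 (by norm_num) a ha
      have h6 : |(6 : ℝ)| = 6 := by norm_num
      rw [h6]
      have h7 : 0 ≤ h ^ 2 * y := by positivity
      nlinarith
    refine hfin.trans ?_
    have h7 : 0 ≤ M * h ^ 2 := by positivity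
    calc M * (h ^ 3 * y + 3 * h ^ 2 * y ^ 2) + M * (h ^ 2 * y) / 6
        = M * h ^ 2 * (y * (h + 3 * y + 1 / 6)) := by ring
      _ ≤ M * h ^ 2 * ((3 * min 1 y) * (1 + 3 * 3 + 1 / 6)) := by gcongr
      _ ≤ 40 * M * h ^ 2 * min 1 y := by
          have : 0 ≤ M * h ^ 2 * min 1 y := by positivity
          nlinarith
  · rw [hf.eq_zero 0 (by norm_num) (s - y) (by linarith),
      hf.eq_zero 2 (by norm_num) (s - y) (by linarith), min_eq_left (by linarith)]
    simp only [mul_zero, zero_div, sub_zero, mul_one]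
    have hy2 : 0 < (y - 2) ^ 4 := by
      have : 0 < y - 2 := by linarith
      positivity
    have hb := (hasSum_poissonWeight_central_four (y := y) hh).mul_left (M / (y - 2) ^ 4)
    have hbound := hsum.norm_le_of_bounded hb fun j => by
      have hj : (0 : ℝ) ≤ j * h := by positivity
      rw [norm_mul, Real.norm_of_nonneg (poissonWeight_nonneg ht j), mul_left_comm]
      refine mul_le_mul_of_nonneg_left ?_ (poissonWeight_nonneg ht j)
      rw [Real.norm_eq_abs, div_mul_eq_mul_div]
      rcases le_or_gt (s - j * h) (-1) with h1 | h1
      · rw [hf.eq_zero 0 (by norm_num) _ h1, abs_zero]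
        positivity
      · rw [le_div_iff₀ hy2]
        refine mul_le_mul (hf.abs_le 0 (by norm_num) _ (by linarith)) ?_ hy2.le hM
        rw [← Even.pow_abs (show Even 4 by decide) (j * h - y), abs_of_nonpos (by linarith)]
        exact pow_le_pow_left₀ (by linarith) (by linarith) 4
    rw [Real.norm_eq_abs] at hbound
    refine hbound.trans ?_
    rw [div_mul_eq_mul_div, div_le_iff₀ hy2]
    have h1 : h ^ 3 * y + 3 * h ^ 2 * y ^ 2 ≤ 40 * h ^ 2 * (y - 2) ^ 4 := by
      have h2 : h ^ 3 * y ≤ h ^ 2 * y := by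
        have : h ^ 3 ≤ h ^ 2 := pow_le_pow_of_le_one hh.le hh1 (by norm_num)
        gcongr
      have h4 : y + 3 * y ^ 2 ≤ 40 * (y - 2) ^ 4 := by
        have h5 : (y - 2) ^ 2 ≤ (y - 2) ^ 4 := pow_le_pow_right₀ (by linarith) (by norm_num)
        nlinarith
      nlinarith [sq_nonneg h, mul_le_mul_of_nonneg_left h4 (sq_nonneg h)]
    calc M * (h ^ 3 * y + 3 * h ^ 2 * y ^ 2) ≤ M * (40 * h ^ 2 * (y - 2) ^ 4) := by gcongr
      _ = _ := by ring

end Taylor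

section Quadrature

variable {φ : Measure ℝ} {f : ℕ → ℝ → ℝ} {M s : ℝ}

theorem IsCausalChain.abs_sub_le (hf : IsCausalChain f M) (hs : s ≤ 1) {y : ℝ} (hy : 0 < y) :
    |f 0 s - f 0 (s - y)| ≤ 2 * M * min 1 y := by
  have hM := hf.nonneg
  rcases le_total 1 y with h1 | h1
  · rw [min_eq_left h1]
    have h2 := hf.abs_le 0 (by norm_num) s hs
    have h3 := hf.abs_le 0 (by norm_num) (s - y) (by linarith)
    linarith [_root_.abs_sub (f 0 s) (f 0 (s - y))]
  · rw [min_eq_right h1]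
    have key := abs_le_mul_abs_sub_pow_succ (R := fun t => f 0 t - f 0 (s - y)) (b := s) 0 hM
      (fun t => (hf.hasDerivAt 0 (by norm_num) t).sub_const _) (sub_self _) (by linarith) hs
      (fun t ht => by simpa using hf.abs_le 1 (by norm_num) t ht)
    have e : |s - (s - y)| = y := by rw [sub_sub_cancel, abs_of_pos hy]
    rw [e, zero_add, pow_one] at key
    nlinarith

theorem IsCausalChain.abs_mul_le (hf : IsCausalChain f M) (hs : s ≤ 1) {y : ℝ} (hy : 0 < y) :
    |y * f 2 (s - y)| ≤ 2 * M * min 1 y := by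
  have hM := hf.nonneg
  rcases le_or_gt 2 y with h2 | h2
  · rw [hf.eq_zero 2 (by norm_num) _ (by linarith), mul_zero, abs_zero]
    positivity
  · rw [abs_mul, abs_of_pos hy]
    have h1 := hf.abs_le 2 (by norm_num) (s - y) (by linarith)
    have h3 : y ≤ 2 * min 1 y := by
      rcases le_total 1 y with h1 | h1
      · rw [min_eq_left h1]; linarith
      · rw [min_eq_right h1]; linarith
    calc y * |f 2 (s - y)| ≤ (2 * min 1 y) * M := mul_le_mul h3 h1 (abs_nonneg _) (by positivity)
      _ = _ := by ring

theorem IsCausalChain.integrableOn_levyTail_mul_sub (hf : IsCausalChain f M) (hφ : H0 φ)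
    (hs : s ≤ 1) : IntegrableOn (fun y => levyTail φ y * (f 0 s - f 0 (s - y))) (Ioi 0) := by
  have hc := hf.continuous (i := 0) (by norm_num)
  exact hφ.integrableOn_mul_levyTail (F := fun y => f 0 s - f 0 (s - y))
    (by fun_prop : Continuous fun y => f 0 s - f 0 (s - y)).aestronglyMeasurable
    fun y hy => hf.abs_sub_le hs hy

theorem IsCausalChain.integrableOn_levyTail_mul_mul (hf : IsCausalChain f M) (hφ : H0 φ)
    (hs : s ≤ 1) : IntegrableOn (fun y => levyTail φ y * (y * f 2 (s - y))) (Ioi 0) := by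
  have hc := hf.continuous (i := 2) (by norm_num)
  exact hφ.integrableOn_mul_levyTail (F := fun y => y * f 2 (s - y))
    (by fun_prop : Continuous fun y => y * f 2 (s - y)).aestronglyMeasurable
    fun y hy => hf.abs_mul_le hs hy

theorem IsCausalChain.abs_quadrature_sub_le (hf : IsCausalChain f M) (hφ : H0 φ) (hs : s ≤ 1)
    {h : ℝ} (hh : 0 < h) (hh1 : h ≤ 1) {N : ℕ} (hN : 2 ≤ N * h) :
    |(∑ j ∈ Finset.range N, grunPsiM1 φ j h * f 0 (s - j * h))
      - (∫ y in Ioi (0 : ℝ), levyTail φ y * (f 0 s - f 0 (s - y)))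
      - h * (-(1 / 2) * ∫ y in Ioi (0 : ℝ), levyTail φ y * (y * f 2 (s - y)))|
      ≤ 40 * M * h ^ 2 * ∫ y in Ioi (0 : ℝ), min 1 y * levyTail φ y := by
  have hint : ∀ j ∈ Finset.range N, IntegrableOn (fun y => levyTail φ y *
      ((if j = 0 then 1 else 0) - poissonWeight (y / h) j) * f 0 (s - j * h)) (Ioi 0) :=
    fun j _ => (hφ.integrableOn_mul_levyTail
      (F := fun y => (if j = 0 then 1 else 0) - poissonWeight (y / h) j)
      (continuous_const.sub (continuous_poissonWeight_div h j)).aestronglyMeasurable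
      fun y hy => norm_ite_sub_poissonWeight_le hh hy j).mul_const _
  have hsum : ∑ j ∈ Finset.range N, grunPsiM1 φ j h * f 0 (s - j * h)
      = ∫ y in Ioi (0 : ℝ), ∑ j ∈ Finset.range N, levyTail φ y *
        ((if j = 0 then 1 else 0) - poissonWeight (y / h) j) * f 0 (s - j * h) := by
    rw [integral_finsetSum _ hint]
    refine Finset.sum_congr rfl fun j _ => ?_
    rw [grunPsiM1_eq_integral hφ j hh, integral_mul_const]
  have hN0 : 0 ∈ Finset.range N := by
    rw [Finset.mem_range, Nat.pos_iff_ne_zero]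
    rintro rfl
    norm_num at hN
  rw [hsum, ← integral_sub (integrable_finsetSum _ hint) (hf.integrableOn_levyTail_mul_sub hφ hs),
    ← integral_const_mul, ← integral_const_mul, ← integral_sub]
  rotate_left
  · exact (integrable_finsetSum _ hint).sub (hf.integrableOn_levyTail_mul_sub hφ hs)
  · exact ((hf.integrableOn_levyTail_mul_mul hφ hs).const_mul _).const_mul _
  have e : ∀ y : ℝ, (∑ j ∈ Finset.range N, levyTail φ y *
      ((if j = 0 then 1 else 0) - poissonWeight (y / h) j) * f 0 (s - j * h))
      - levyTail φ y * (f 0 s - f 0 (s - y)) - h * (-(1 / 2) * (levyTail φ y * (y * f 2 (s - y))))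
      = levyTail φ y • -((∑ j ∈ Finset.range N, poissonWeight (y / h) j * f 0 (s - j * h))
        - f 0 (s - y) - h * (y * f 2 (s - y) / 2)) := by
    intro y
    have h1 : ∑ j ∈ Finset.range N, levyTail φ y *
        ((if j = 0 then 1 else 0) - poissonWeight (y / h) j) * f 0 (s - j * h)
        = levyTail φ y * (f 0 s
          - ∑ j ∈ Finset.range N, poissonWeight (y / h) j * f 0 (s - j * h)) := by
      simp only [mul_assoc, ← Finset.mul_sum, sub_mul, Finset.sum_sub_distrib, ite_mul, one_mul,
        zero_mul, Finset.sum_ite_eq', if_pos hN0, Nat.cast_zero, sub_zero]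
    rw [h1, smul_eq_mul]; ring
  simp only [e]
  rw [← Real.norm_eq_abs]
  refine hφ.norm_integral_mul_levyTail_le fun y hy => ?_
  rw [norm_neg, Real.norm_eq_abs]
  exact hf.abs_poisson_sub_le hs hh hh1 hN hy

end Quadrature

section Renewal

variable {φ : Measure ℝ} {k : ℝ → ℝ} {f : ℕ → ℝ → ℝ} {M s x : ℝ}

theorem IsCausalChain.integrableOn_comp_sub (hf : IsCausalChain f M) {i : ℕ} (hi : i < 4)
    (hs : s ≤ 1) : IntegrableOn (fun a => f i (s - a)) (Ioi 0) := by
  have hc := hf.continuous hi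
  refine ((by fun_prop : Continuous fun a => f i (s - a)).integrableOn_Ioc (a := 0)
    (b := 2)).of_forall_sdiff_eq_zero measurableSet_Ioi fun a ha => ?_
  have : 2 < a := not_le.1 fun h => ha.2 ⟨ha.1, h⟩
  exact hf.eq_zero i hi.le _ (by linarith)

theorem IsCausalChain.intervalIntegral_comp_sub (hf : IsCausalChain f M) {i : ℕ} (hi : i < 3)
    (s y : ℝ) : ∫ a in (0 : ℝ)..y, f (i + 1) (s - a) = f i s - f i (s - y) := by
  rw [intervalIntegral.integral_comp_sub_left (fun a => f (i + 1) a) s, sub_zero]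
  exact intervalIntegral.integral_eq_sub_of_hasDerivAt
    (fun t _ => hf.hasDerivAt i (by omega) t)
    ((hf.continuous (i := i + 1) (by omega)).intervalIntegrable _ _)

theorem IsCausalChain.integral_levyTail_mul_sub (hf : IsCausalChain f M) (hφ : H0 φ)
    (hs : s ≤ 1) : ∫ y in Ioi (0 : ℝ), levyTail φ y * (f 0 s - f 0 (s - y))
      = ∫ a in Ioi (0 : ℝ), PhiFn φ a * f 1 (s - a) := by
  have hc := hf.continuous (i := 1) (by norm_num)
  have key := (hφ.integral_mul_PhiFn (q := fun a => f 1 (s - a)) (C := M)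
    (by fun_prop : Continuous fun a => f 1 (s - a)).stronglyMeasurable
    (fun a ha => hf.abs_le 1 (by norm_num) _ (by linarith))
    (hf.integrableOn_comp_sub (by norm_num) hs)).2
  simp only [smul_eq_mul, hf.intervalIntegral_comp_sub (i := 0) (by norm_num)] at key
  exact key.symm

/-- Convolving the scale kernel with the generator applied to the primitive of `f 1` recovers
that primitive. -/
theorem IsCausalChain.integral_scaleKernel_mul (hf : IsCausalChain f M) (hφ : H0 φ)
    (hk : IsScaleKernel φ k) (hx : x ≤ 1) :
    IntegrableOn (fun b => k (b - 1) *
      ∫ y in Ioi (0 : ℝ), levyTail φ y * (f 0 (x - b) - f 0 (x - b - y))) (Ioc 0 2) ∧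
    ∫ b in Ioc (0 : ℝ) 2, k (b - 1) *
      ∫ y in Ioi (0 : ℝ), levyTail φ y * (f 0 (x - b) - f 0 (x - b - y)) = f 0 x := by
  obtain ⟨hi, he⟩ := renewal_identity hφ hk
    (hf.integrableOn_comp_sub (i := 1) (by norm_num) hx)
  have e : EqOn (fun b => k (b - 1) *
      ∫ y in Ioi (0 : ℝ), levyTail φ y * (f 0 (x - b) - f 0 (x - b - y)))
      (fun b => k (b - 1) * ∫ a in Ioi (0 : ℝ), PhiFn φ a * f 1 (x - b - a)) (Ioi 0) :=
    fun b hb => by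
      have hb' : (0 : ℝ) < b := hb
      simp only [hf.integral_levyTail_mul_sub hφ (s := x - b) (by linarith)]
  have hi' := hi.congr_fun e.symm measurableSet_Ioi
  refine ⟨hi'.mono_set Ioc_subset_Ioi_self, ?_⟩
  rw [← setIntegral_eq_of_subset_of_forall_sdiff_eq_zero measurableSet_Ioi Ioc_subset_Ioi_self
    (fun b hb => ?_), setIntegral_congr_fun measurableSet_Ioi e, he]
  · rw [setIntegral_eq_of_subset_of_forall_sdiff_eq_zero measurableSet_Ioi
      (Ioc_subset_Ioi_self : Ioc (0 : ℝ) 2 ⊆ Ioi 0) (fun a ha => ?_),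
      ← intervalIntegral.integral_of_le (by norm_num),
      hf.intervalIntegral_comp_sub (i := 0) (by norm_num),
      hf.eq_zero 0 (by norm_num) (x - 2) (by linarith), sub_zero]
    have : 2 < a := not_le.1 fun h => ha.2 ⟨ha.1, h⟩
    exact hf.eq_zero 1 (by norm_num) _ (by linarith)
  · have : 2 < b := not_le.1 fun h => hb.2 ⟨hb.1, h⟩
    rw [setIntegral_eq_zero_of_forall_eq_zero, mul_zero]
    intro y hy
    have hy' : (0 : ℝ) < y := hy
    rw [hf.eq_zero 0 (by norm_num) (x - b) (by linarith),
      hf.eq_zero 0 (by norm_num) (x - b - y) (by linarith), sub_zero, mul_zero]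

end Renewal

section Correction

variable {φ : Measure ℝ} {k r : ℝ → ℝ} {M x : ℝ}

theorem H0.integrableOn_mul_levyTail_Ioc (hφ : H0 φ) :
    IntegrableOn (fun u => u * levyTail φ u) (Ioc 0 2) := by
  have h := hφ.integrableOn_mul_levyTail (F := fun u => min u 2) (C := 2)
    (continuous_id.min continuous_const).aestronglyMeasurable fun y hy => by
      rw [Real.norm_of_nonneg (by positivity), mul_min_of_nonneg _ _ zero_le_two, mul_one,
        min_comm]
      exact min_le_min_left _ (by linarith)
  refine (h.mono_set (Ioc_subset_Ioi_self : Ioc (0 : ℝ) 2 ⊆ Ioi 0)).congr_fun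
    (fun u hu => ?_) measurableSet_Ioc
  simp only [smul_eq_mul, min_eq_left hu.2, mul_comm]

/-- The inner integral `∫_0^z u φ((u,∞)) k(z-u-1) du` of the correction term. -/
def correctionKernel (φ : Measure ℝ) (k : ℝ → ℝ) (z : ℝ) : ℝ :=
  ∫ u in (0 : ℝ)..z, u * levyTail φ u * k (z - u - 1)

/-- The convolution integrand of `b ↦ k (b - 1)` and `u ↦ u φ((u,∞))`, both truncated to
`(0, 2]`. -/
def truncatedIntegrand (φ : Measure ℝ) (k : ℝ → ℝ) (z b : ℝ) : ℝ :=
  (Ioc 0 2).indicator (fun b => k (b - 1)) b *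
    (Ioc 0 2).indicator (fun u => u * levyTail φ u) (z - b)

theorem integrable_truncatedIntegrand (hφ : H0 φ) (hk : IsScaleKernel φ k) :
    Integrable (Function.uncurry (truncatedIntegrand φ k)) (volume.prod volume) :=
  ((integrable_indicator_iff measurableSet_Ioc).2
    (hk.integrableOn_Ioc 2)).convolution_integrand (ContinuousLinearMap.mul ℝ ℝ)
    ((integrable_indicator_iff measurableSet_Ioc).2 (hφ.integrableOn_mul_levyTail_Ioc))

theorem integral_truncatedIntegrand {z : ℝ} (hz : z ∈ Ioc (0 : ℝ) 2) :
    ∫ b, truncatedIntegrand φ k z b = correctionKernel φ k z := by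
  rw [← integral_sub_left_eq_self _ volume z, correctionKernel,
    intervalIntegral.integral_of_le hz.1.le, integral_Ioc_eq_integral_Ioo,
    ← integral_indicator measurableSet_Ioo]
  congr 1 with u
  rw [truncatedIntegrand, sub_sub_cancel]
  by_cases hu : u ∈ Ioo 0 z
  · rw [indicator_of_mem hu, indicator_of_mem (by constructor <;> linarith [hu.1, hu.2, hz.2]),
      indicator_of_mem (by constructor <;> linarith [hu.1, hu.2, hz.2]), mul_comm]
  · rw [indicator_of_notMem hu]
    by_cases hu0 : 0 < u
    · rw [indicator_of_notMem fun h => hu ⟨hu0, by linarith [h.1]⟩, zero_mul]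
    · rw [indicator_of_notMem (a := u) fun h => hu0 h.1, mul_zero]

theorem integrableOn_correctionKernel (hφ : H0 φ) (hk : IsScaleKernel φ k) :
    IntegrableOn (correctionKernel φ k) (Ioc 0 2) :=
  (integrable_truncatedIntegrand hφ hk).integral_prod_left.integrableOn.congr_fun
    (fun _ hz => integral_truncatedIntegrand hz) measurableSet_Ioc

/-- Fubini for the correction term. -/
theorem integral_mul_correctionKernel (hφ : H0 φ) (hk : IsScaleKernel φ k) (hr : Continuous r)
    (hM : ∀ s, |r s| ≤ M) (h0 : ∀ s ≤ -1, r s = 0) (hx : x ≤ 1) :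
    IntegrableOn (fun b => k (b - 1) *
      ∫ y in Ioi (0 : ℝ), levyTail φ y * (y * r (x - b - y))) (Ioc 0 2) ∧
    ∫ z in Ioc (0 : ℝ) 2, r (x - z) * correctionKernel φ k z
      = ∫ b in Ioc (0 : ℝ) 2, k (b - 1) *
        ∫ y in Ioi (0 : ℝ), levyTail φ y * (y * r (x - b - y)) := by
  have hint : Integrable (Function.uncurry fun z b => r (x - z) * truncatedIntegrand φ k z b)
      (volume.prod volume) :=
    (integrable_truncatedIntegrand hφ hk).bdd_mul (f := fun p : ℝ × ℝ => r (x - p.1)) (c := M)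
      (by fun_prop : Continuous fun p : ℝ × ℝ => r (x - p.1)).aestronglyMeasurable
      (Eventually.of_forall fun p => hM _)
  have hin : ∀ b, ∫ z, r (x - z) * truncatedIntegrand φ k z b
      = (Ioc 0 2).indicator (fun b => k (b - 1) *
        ∫ y in Ioi (0 : ℝ), levyTail φ y * (y * r (x - b - y))) b := by
    intro b
    rw [← integral_add_right_eq_self _ b]
    by_cases hb : b ∈ Ioc (0 : ℝ) 2
    · rw [indicator_of_mem hb, ← integral_const_mul, ← integral_indicator measurableSet_Ioi]
      congr 1 with y
      rw [truncatedIntegrand, indicator_of_mem hb, add_sub_cancel_right,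
        show x - (y + b) = x - b - y by ring]
      by_cases hy : y ∈ Ioc (0 : ℝ) 2
      · rw [indicator_of_mem hy, indicator_of_mem (show y ∈ Ioi 0 from hy.1)]; ring
      · rw [indicator_of_notMem hy]
        by_cases hy0 : 0 < y
        · rw [indicator_of_mem (show y ∈ Ioi 0 from hy0)]
          have : 2 < y := not_le.1 fun h => hy ⟨hy0, h⟩
          rw [h0 _ (by linarith [hb.1])]; simp
        · rw [indicator_of_notMem (show y ∉ Ioi 0 from hy0)]; simp
    · simp [truncatedIntegrand, indicator_of_notMem hb]
  have hout : ∀ z, ∫ b, r (x - z) * truncatedIntegrand φ k z b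
      = (Ioc 0 2).indicator (fun z => r (x - z) * correctionKernel φ k z) z := by
    intro z
    rw [integral_const_mul]
    by_cases hz : z ∈ Ioc (0 : ℝ) 2
    · rw [indicator_of_mem hz, integral_truncatedIntegrand hz]
    · rw [indicator_of_notMem hz]
      by_cases hz0 : 0 < z
      · have : 2 < z := not_le.1 fun h => hz ⟨hz0, h⟩
        rw [h0 _ (by linarith), zero_mul]
      · have : ∀ b, truncatedIntegrand φ k z b = 0 := fun b => by
          rw [truncatedIntegrand]
          by_cases hb : 0 < b
          · rw [indicator_of_notMem (a := z - b) fun h => hz0 (by linarith [h.1]), mul_zero]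
          · rw [indicator_of_notMem fun h => hb h.1, zero_mul]
        simp [this]
  constructor
  · rw [← integrable_indicator_iff measurableSet_Ioc]
    exact (integrable_congr (Eventually.of_forall hin)).1 hint.integral_prod_right
  · rw [← integral_indicator measurableSet_Ioc, ← integral_indicator measurableSet_Ioc]
    simp only [← hin, ← hout]
    exact integral_integral_swap hint

theorem continuous_integral_mul_correctionKernel (hφ : H0 φ) (hk : IsScaleKernel φ k)
    (hr : Continuous r) (hM : ∀ s, |r s| ≤ M) :
    Continuous fun x => ∫ z in Ioc (0 : ℝ) 2, r (x - z) * correctionKernel φ k z := by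
  have hi := integrableOn_correctionKernel hφ hk
  refine continuous_of_dominated (bound := fun z => M * ‖correctionKernel φ k z‖)
    (fun x => (by fun_prop : Continuous fun z => r (x - z)).aestronglyMeasurable.mul
      hi.aestronglyMeasurable) (fun x => Eventually.of_forall fun z => ?_) (hi.norm.const_mul M)
    (Eventually.of_forall fun z => by fun_prop)
  rw [norm_mul]
  exact mul_le_mul_of_nonneg_right (hM _) (norm_nonneg _)

theorem Fplus_eq_integral {g : ℝ → ℝ} (h0 : ∀ s ≤ -1, r s = 0)
    (hg : ∀ s ∈ Ioo (-1 : ℝ) 1, deriv g s = r s) (hx : x ∈ Icc (-1 : ℝ) 1) :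
    Fplus φ k g x = -(1 / 2) * ∫ z in Ioc (0 : ℝ) 2, r (x - z) * correctionKernel φ k z := by
  rw [Fplus, intervalIntegral.integral_of_le (by linarith [hx.1])]
  congr 1
  rw [setIntegral_eq_of_subset_of_forall_sdiff_eq_zero measurableSet_Ioc
    (Ioc_subset_Ioc_right (by linarith [hx.2] : x + 1 ≤ 2)) (fun z hz => ?_),
    integral_Ioc_eq_integral_Ioo, integral_Ioc_eq_integral_Ioo]
  · refine setIntegral_congr_fun measurableSet_Ioo fun z hz => ?_
    simp only [hg (x - z) ⟨by linarith [hz.2], by linarith [hz.1, hx.2]⟩, correctionKernel]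
  · have : x + 1 < z := not_le.1 fun h => hz.2 ⟨hz.1.1, h⟩
    rw [h0 _ (by linarith), zero_mul]

end Correction

section LevyIntegral

variable {φ : Measure ℝ} {k g : ℝ → ℝ} {f : ℕ → ℝ → ℝ} {M s : ℝ}

theorem IsScaleKernel.kIter_one (hk : IsScaleKernel φ k) {t : ℝ} (ht : -1 ≤ t) :
    kIter k 1 t = ∫ b in Ioc (0 : ℝ) (t + 1), k (b - 1) := by
  change ∫ y in Iic t, k y = _
  rw [setIntegral_eq_of_subset_of_forall_sdiff_eq_zero measurableSet_Iic
    (Icc_subset_Iic_self : Icc (-1) t ⊆ Iic t) fun y hy =>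
      hk.1 y (not_le.1 fun h => hy.2 ⟨h, hy.1⟩),
    integral_Icc_eq_integral_Ioc, ← intervalIntegral.integral_of_le ht,
    ← intervalIntegral.integral_of_le (by linarith), intervalIntegral.integral_comp_sub_right]
  simp

theorem IsCausalChain.iplusOp_eq_integral (hf : IsCausalChain f M) (hk : IsScaleKernel φ k)
    (hg : ∀ y ∈ Icc (-1 : ℝ) 1, g y = f 1 y) (hs : s ≤ 1) :
    IplusOp (kIter k 1) g s = ∫ b in Ioc (0 : ℝ) 2, k (b - 1) * f 0 (s - b) := by
  by_cases hs1 : -1 ≤ s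
  swap
  · rw [IplusOp, if_neg hs1, setIntegral_eq_zero_of_forall_eq_zero]
    intro b hb
    rw [hf.eq_zero 0 (by norm_num) _ (by linarith [hb.1]), mul_zero]
  have hint : Integrable (Function.uncurry fun y b =>
      (Iic (s - y)).indicator (fun b => f 1 y * k (b - 1)) b)
      ((volume.restrict (Ioc (-1) s)).prod (volume.restrict (Ioc 0 2))) := by
    have hf1 : IntegrableOn (f 1) (Ioc (-1) s) :=
      (hf.continuous (i := 1) (by norm_num)).integrableOn_Ioc
    have h := (hf1.mul_prod (hk.integrableOn_Ioc 2)).indicator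
      (measurableSet_le measurable_snd (measurable_const.sub measurable_fst) :
        MeasurableSet {p : ℝ × ℝ | p.2 ≤ s - p.1})
    refine h.congr (Eventually.of_forall fun p => ?_)
    simp [Function.uncurry, indicator_apply]
  rw [IplusOp, if_pos hs1, intervalIntegral.integral_of_le hs1]
  calc ∫ y in Ioc (-1) s, kIter k 1 (s - y - 1) * g y
      = ∫ y in Ioc (-1) s, ∫ b in Ioc (0 : ℝ) 2,
        (Iic (s - y)).indicator (fun b => f 1 y * k (b - 1)) b := by
        refine setIntegral_congr_fun measurableSet_Ioc fun y hy => ?_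
        have e : Ioc 0 2 ∩ Iic (s - y) = Ioc 0 (s - y) := by
          rw [Ioc_inter_Iic, min_eq_right (by linarith [hy.1])]
        simp only [hg y ⟨hy.1.le, hy.2.trans hs⟩, hk.kIter_one (t := s - y - 1)
          (by linarith [hy.2]), setIntegral_indicator measurableSet_Iic, e, integral_const_mul, sub_add_cancel, mul_comm]
    _ = ∫ b in Ioc (0 : ℝ) 2, ∫ y in Ioc (-1) s,
        (Iic (s - y)).indicator (fun b => f 1 y * k (b - 1)) b := integral_integral_swap hint
    _ = ∫ b in Ioc (0 : ℝ) 2, k (b - 1) * f 0 (s - b) := by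
        refine setIntegral_congr_fun measurableSet_Ioc fun b hb => ?_
        have e : ∀ y, (Iic (s - y)).indicator (fun b => f 1 y * k (b - 1)) b
            = (Iic (s - b)).indicator (fun y => f 1 y * k (b - 1)) y := fun y => by
          simp only [indicator_apply, mem_Iic, le_sub_comm]
        have e' : Ioc (-1) s ∩ Iic (s - b) = Ioc (-1) (s - b) := by
          rw [Ioc_inter_Iic, min_eq_right (by linarith [hb.1])]
        simp only [e, setIntegral_indicator measurableSet_Iic, e', integral_mul_const]
        rw [mul_comm]
        congr 1
        rcases le_total (-1) (s - b) with h | h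
        · rw [← intervalIntegral.integral_of_le h, intervalIntegral.integral_eq_sub_of_hasDerivAt
            (fun t _ => hf.hasDerivAt 0 (by norm_num) t)
            ((hf.continuous (i := 1) (by norm_num)).intervalIntegrable _ _),
            hf.eq_zero 0 (by norm_num) (-1) le_rfl, sub_zero]
        · rw [Ioc_eq_empty_of_le h, setIntegral_empty, hf.eq_zero 0 (by norm_num) _ h]

end LevyIntegral

section Chain

/-- The `n`-fold primitive of `w` based at `-1`. -/
def iteratedPrimitive (w : ℝ → ℝ) : ℕ → ℝ → ℝ
  | 0 => w
  | n + 1 => fun x => ∫ t in (-1 : ℝ)..x, iteratedPrimitive w n t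

variable {w g : ℝ → ℝ}

theorem continuous_iteratedPrimitive (hw : Continuous w) : ∀ n, Continuous (iteratedPrimitive w n)
  | 0 => hw
  | n + 1 => continuous_iff_continuousAt.2 fun x =>
    ((continuous_iteratedPrimitive hw n).integral_hasStrictDerivAt (-1) x).hasDerivAt.continuousAt

theorem hasDerivAt_iteratedPrimitive (hw : Continuous w) (n : ℕ) (x : ℝ) :
    HasDerivAt (iteratedPrimitive w (n + 1)) (iteratedPrimitive w n x) x :=
  ((continuous_iteratedPrimitive hw n).integral_hasStrictDerivAt (-1) x).hasDerivAt

theorem iteratedPrimitive_eq_zero (h0 : ∀ x ≤ -1, w x = 0) :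
    ∀ n, ∀ x ≤ -1, iteratedPrimitive w n x = 0
  | 0, x, hx => h0 x hx
  | n + 1, x, hx => by
    change ∫ t in (-1 : ℝ)..x, iteratedPrimitive w n t = 0
    rw [intervalIntegral.integral_symm, intervalIntegral.integral_of_le hx,
      setIntegral_eq_zero_of_forall_eq_zero fun t ht => iteratedPrimitive_eq_zero h0 n t ht.2,
      neg_zero]

theorem exists_isCausalChain_iteratedPrimitive (hw : Continuous w) (h0 : ∀ x ≤ -1, w x = 0) :
    ∃ M, IsCausalChain (fun i => iteratedPrimitive w (4 - i)) M := by
  have hb : ∀ n, ∃ C, ∀ x ≤ 1, |iteratedPrimitive w n x| ≤ C := fun n => by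
    obtain ⟨C, hC⟩ := (isCompact_Icc (a := (-1 : ℝ)) (b := 1)).exists_bound_of_continuousOn
      (continuous_iteratedPrimitive hw n).continuousOn
    refine ⟨C, fun x hx => ?_⟩
    rcases le_total (-1) x with h | h
    · exact hC x ⟨h, hx⟩
    · rw [iteratedPrimitive_eq_zero h0 n x h, abs_zero]
      exact (norm_nonneg _).trans (hC 0 (by norm_num))
  choose C hC using hb
  refine ⟨∑ n ∈ Finset.range 5, C n, fun i hi x => ?_,
    fun i _ x hx => iteratedPrimitive_eq_zero h0 _ x hx, fun i hi x hx => (hC _ x hx).trans ?_⟩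
  · obtain ⟨n, hn⟩ : ∃ n, 4 - i = n + 1 := ⟨3 - i, by omega⟩
    simp only [hn, show 4 - (i + 1) = n by omega]
    exact hasDerivAt_iteratedPrimitive hw n x
  · exact Finset.single_le_sum (f := C) (fun n _ => (abs_nonneg _).trans (hC n 0 zero_le_one))
      (Finset.mem_range.2 (by omega))

theorem iteratedPrimitive_eq_iteratedDerivWithin {N : ℕ}
    (hg : ContDiffOn ℝ N g (Icc (-1) 1))
    (hgj : ∀ j ≤ N, iteratedDerivWithin j g (Icc (-1) 1) (-1) = 0)
    (hwg : ∀ x ∈ Icc (-1 : ℝ) 1, w x = iteratedDerivWithin N g (Icc (-1) 1) x) :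
    ∀ n ≤ N, ∀ x ∈ Icc (-1 : ℝ) 1,
      iteratedPrimitive w n x = iteratedDerivWithin (N - n) g (Icc (-1) 1) x
  | 0, _, x, hx => hwg x hx
  | n + 1, hn, x, hx => by
    have hu : UniqueDiffOn ℝ (Icc (-1 : ℝ) 1) := uniqueDiffOn_Icc (by norm_num)
    have hsub : Icc (-1) x ⊆ Icc (-1 : ℝ) 1 := Icc_subset_Icc_right hx.2
    have e : N - n = N - (n + 1) + 1 := by omega
    have hc := hg.continuousOn_iteratedDerivWithin (m := N - n) (by exact_mod_cast N.sub_le n) hu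
    have hd := hg.differentiableOn_iteratedDerivWithin (m := N - (n + 1))
      (by exact_mod_cast (by omega : N - (n + 1) < N)) hu
    have key := intervalIntegral.integral_eq_sub_of_hasDerivAt_of_le hx.1
      (hd.continuousOn.mono hsub) (f' := iteratedDerivWithin (N - n) g (Icc (-1) 1))
      (fun t ht => by
        have ht' : t ∈ Icc (-1 : ℝ) 1 := hsub (Ioo_subset_Icc_self ht)
        rw [e, iteratedDerivWithin_succ]
        exact (hd t ht').hasDerivWithinAt.hasDerivAt
          (Icc_mem_nhds ht.1 (ht.2.trans_le hx.2)))
      ((hc.mono hsub).intervalIntegrable_of_Icc hx.1)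
    rw [hgj _ (N.sub_le _), sub_zero] at key
    rw [← key]
    refine intervalIntegral.integral_congr fun t ht => ?_
    rw [uIcc_of_le hx.1] at ht
    exact iteratedPrimitive_eq_iteratedDerivWithin hg hgj hwg n (by omega) t (hsub ht)

theorem exists_isCausalChain (hg : ContDiffOn ℝ 3 g (Icc (-1) 1))
    (hgj : ∀ j ≤ 3, iteratedDerivWithin j g (Icc (-1) 1) (-1) = 0) :
    ∃ f M, IsCausalChain f M ∧ (∀ y ∈ Icc (-1 : ℝ) 1, g y = f 1 y) ∧
      ∀ y ∈ Ioo (-1 : ℝ) 1, deriv g y = f 2 y := by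
  have h11 : (-1 : ℝ) ≤ 1 := by norm_num
  have hc := hg.continuousOn_iteratedDerivWithin (m := 3) le_rfl (uniqueDiffOn_Icc (by norm_num))
  set w : ℝ → ℝ := IccExtend h11 ((Icc (-1) 1).domRestrict (iteratedDerivWithin 3 g (Icc (-1) 1)))
  have hw : Continuous w := hc.domRestrict.Icc_extend'
  have hwg : ∀ x ∈ Icc (-1 : ℝ) 1, w x = iteratedDerivWithin 3 g (Icc (-1) 1) x :=
    fun x hx => IccExtend_of_mem _ _ hx
  obtain ⟨M, hM⟩ := exists_isCausalChain_iteratedPrimitive hw fun x hx =>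
    (IccExtend_of_le_left h11 _ hx).trans (hgj 3 le_rfl)
  have key := iteratedPrimitive_eq_iteratedDerivWithin (N := 3) hg hgj hwg
  refine ⟨_, M, hM, fun y hy => ?_, fun y hy => ?_⟩
  · simpa using (key 3 le_rfl y hy).symm
  · have h := key 2 (by norm_num) y (Ioo_subset_Icc_self hy)
    rw [show 3 - 2 = 1 from rfl, iteratedDerivWithin_one,
      derivWithin_of_mem_nhds (Icc_mem_nhds hy.1 hy.2)] at h
    exact h.symm

end Chain

/-- exact first-order expansion of the order `ψ-1` quadrature applied to
the Lévy integral. -/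
theorem psiM1_quadrature_expansion (φ : Measure ℝ) (hH0 : H0 φ) (k : ℝ → ℝ)
    (hk : IsScaleKernel φ k) (m : ℕ) (hm : 6 ≤ m) (g : ℝ → ℝ)
    (hg : ContDiffOn ℝ (m : ℕ∞) g (Icc (-1) 1))
    (hgj : ∀ j : ℕ, j ≤ m → iteratedDerivWithin j g (Icc (-1) 1) (-1) = 0)
    (hg0 : ∀ x : ℝ, x < -1 → g x = 0) :
    ContinuousOn (Fplus φ k g) (Icc (-1) 1) ∧
    Fplus φ k g (-1) = 0 ∧
    ∃ C : ℝ, 0 < C ∧ ∀ x ∈ Icc (-1 : ℝ) 1, ∀ h ∈ Ioc (0 : ℝ) 1,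
      |(∑' j : ℕ, grunPsiM1 φ j h * IplusOp (kIter k 1) g (x - (j : ℝ) * h)) -
          (∫ y in (-1 : ℝ)..x, g y) - h * Fplus φ k g x| ≤ C * h ^ 2 := by
  have hgn : ∀ n : ℕ, n ≤ m → ContDiffOn ℝ n g (Icc (-1) 1) := fun n hn =>
    hg.of_le (by exact_mod_cast hn)
  obtain ⟨f, M, hf, hgf, hgf'⟩ := exists_isCausalChain (hgn 3 (by omega)) fun j hj =>
    hgj j (by omega)
  set r : ℝ → ℝ := fun s => f 2 (min s 1)
  have hf2 : Continuous (f 2) := hf.continuous (by norm_num)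
  have hr : Continuous r := by fun_prop
  have hrM : ∀ s, |r s| ≤ M := fun s => hf.abs_le 2 (by norm_num) _ (min_le_right _ _)
  have hr0 : ∀ s ≤ -1, r s = 0 := fun s hs =>
    hf.eq_zero 2 (by norm_num) _ ((min_le_left _ _).trans hs)
  have hr1 : ∀ s ≤ 1, r s = f 2 s := fun s hs => by simp only [r, min_eq_left hs]
  have hF : ∀ x ∈ Icc (-1 : ℝ) 1, Fplus φ k g x
      = -(1 / 2) * ∫ z in Ioc (0 : ℝ) 2, r (x - z) * correctionKernel φ k z := fun x hx =>
    Fplus_eq_integral hr0 (fun s hs => (hgf' s hs).trans (hr1 s hs.2.le).symm) hx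
  refine ⟨((continuous_integral_mul_correctionKernel hH0 hk hr hrM).const_mul _).continuousOn.congr
    hF, by simp [Fplus], ?_⟩
  set D := 40 * M * ∫ y in Ioi (0 : ℝ), min 1 y * levyTail φ y
  set K := ∫ b in Ioc (0 : ℝ) 2, k (b - 1)
  refine ⟨|D * K| + 1, by positivity, fun x hx h ⟨hh, hh1⟩ => ?_⟩
  set P : ℝ → ℝ := fun s => -(1 / 2) * ∫ y in Ioi (0 : ℝ), levyTail φ y * (y * f 2 (s - y))
  set B : ℝ → ℝ := fun s => ∫ y in Ioi (0 : ℝ), levyTail φ y * (f 0 s - f 0 (s - y))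
  obtain ⟨N, hN⟩ := exists_nat_ge (2 / h)
  rw [div_le_iff₀ hh] at hN
  set Q : ℝ → ℝ := fun s => ∑ j ∈ Finset.range N, grunPsiM1 φ j h * f 0 (s - j * h)
  have hI : ∀ j : ℕ, IplusOp (kIter k 1) g (x - j * h)
      = ∫ b in Ioc (0 : ℝ) 2, k (b - 1) * f 0 (x - b - j * h) := fun j => by
    have hj : (0 : ℝ) ≤ j * h := by positivity
    simp only [hf.iplusOp_eq_integral hk hgf (s := x - j * h) (by linarith [hx.2]), sub_right_comm]
  have hf0 : Continuous (f 0) := hf.continuous (by norm_num)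
  have hint : ∀ j ∈ Finset.range N, IntegrableOn
      (fun b => grunPsiM1 φ j h * (k (b - 1) * f 0 (x - b - j * h))) (Ioc 0 2) := fun j _ => by
    have hj : (0 : ℝ) ≤ j * h := by positivity
    refine Integrable.const_mul (Integrable.mul_bdd (hk.integrableOn_Ioc 2) (c := M)
      (by fun_prop : Continuous fun b => f 0 (x - b - j * h)).aestronglyMeasurable ?_) _
    refine (ae_restrict_iff' measurableSet_Ioc).2 (Eventually.of_forall fun b hb => ?_)
    exact hf.abs_le 0 (by norm_num) _ (by linarith [hb.1, hx.2])
  have hQ : IntegrableOn (fun b => k (b - 1) * Q (x - b)) (Ioc 0 2) ∧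
      ∑' j : ℕ, grunPsiM1 φ j h * IplusOp (kIter k 1) g (x - j * h)
      = ∫ b in Ioc (0 : ℝ) 2, k (b - 1) * Q (x - b) := by
    have e : ∀ b, k (b - 1) * Q (x - b) = ∑ j ∈ Finset.range N,
        grunPsiM1 φ j h * (k (b - 1) * f 0 (x - b - j * h)) := fun b => by
      simp only [Q, Finset.mul_sum, mul_left_comm]
    simp only [e]
    refine ⟨integrable_finsetSum _ hint, ?_⟩
    rw [integral_finsetSum _ hint, tsum_eq_sum (s := Finset.range N) fun j hj => ?_]
    · simp only [hI, integral_const_mul]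
    · have hj' : (N : ℝ) ≤ j := by exact_mod_cast not_lt.1 (by simpa using hj)
      rw [hI, setIntegral_eq_zero_of_forall_eq_zero, mul_zero]
      intro b hb
      rw [hf.eq_zero 0 (by norm_num) _ (by nlinarith [hb.1, hx.2]), mul_zero]
  obtain ⟨hBi, hB⟩ : IntegrableOn (fun b => k (b - 1) * B (x - b)) (Ioc 0 2) ∧
      ∫ b in Ioc (0 : ℝ) 2, k (b - 1) * B (x - b) = f 0 x :=
    hf.integral_scaleKernel_mul hH0 hk hx.2
  obtain ⟨hPi, hP⟩ : IntegrableOn (fun b => k (b - 1) * P (x - b)) (Ioc 0 2) ∧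
      ∫ b in Ioc (0 : ℝ) 2, k (b - 1) * P (x - b) = Fplus φ k g x := by
    obtain ⟨h1, h2⟩ := integral_mul_correctionKernel hH0 hk hr hrM hr0 hx.2
    have e : EqOn (fun b => k (b - 1) * P (x - b)) (fun b => -(1 / 2) * (k (b - 1) *
        ∫ y in Ioi (0 : ℝ), levyTail φ y * (y * r (x - b - y)))) (Ioc 0 2) := fun b hb => by
      have : ∫ y in Ioi (0 : ℝ), levyTail φ y * (y * f 2 (x - b - y))
          = ∫ y in Ioi (0 : ℝ), levyTail φ y * (y * r (x - b - y)) :=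
        setIntegral_congr_fun measurableSet_Ioi fun y hy => by
          have hy' : (0 : ℝ) < y := hy
          simp only [hr1 (x - b - y) (by linarith [hb.1, hx.2])]
      simp only [P, this]; ring
    refine ⟨IntegrableOn.congr_fun (h1.const_mul _) e.symm measurableSet_Ioc, ?_⟩
    rw [setIntegral_congr_fun measurableSet_Ioc e, integral_const_mul, ← h2, hF x hx]
  have hg1 : ∫ y in (-1 : ℝ)..x, g y = f 0 x := by
    rw [intervalIntegral.integral_congr (g := f 1) fun y hy => ?_,
      intervalIntegral.integral_eq_sub_of_hasDerivAt
        (fun t _ => hf.hasDerivAt 0 (by norm_num) t)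
        ((hf.continuous (i := 1) (by norm_num)).intervalIntegrable _ _),
      hf.eq_zero 0 (by norm_num) (-1) le_rfl, sub_zero]
    rw [uIcc_of_le hx.1] at hy
    exact hgf y ⟨hy.1, hy.2.trans hx.2⟩
  have hdiff : (∫ b in Ioc (0 : ℝ) 2, k (b - 1) * Q (x - b)) - f 0 x - h * Fplus φ k g x
      = ∫ b in Ioc (0 : ℝ) 2,
        (k (b - 1) * Q (x - b) - k (b - 1) * B (x - b) - h * (k (b - 1) * P (x - b))) := by
    rw [integral_sub, integral_sub hQ.1 hBi, integral_const_mul, hB, hP]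
    · exact hQ.1.sub hBi
    · exact hPi.const_mul h
  rw [hQ.2, hg1, hdiff, ← Real.norm_eq_abs]
  calc _ ≤ ∫ b in Ioc (0 : ℝ) 2, D * h ^ 2 * k (b - 1) := by
        refine norm_integral_le_of_norm_le ((hk.integrableOn_Ioc 2).const_mul _) ?_
        refine (ae_restrict_iff' measurableSet_Ioc).2 (Eventually.of_forall fun b hb => ?_)
        have hkb := hk.nonneg hb.1
        have key := hf.abs_quadrature_sub_le hH0 (s := x - b) (by linarith [hb.1, hx.2]) hh hh1 hN
        rw [← mul_sub, mul_left_comm, ← mul_sub, norm_mul, Real.norm_of_nonneg hkb,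
          mul_comm (D * h ^ 2)]
        refine mul_le_mul_of_nonneg_left (key.trans (le_of_eq ?_)) hkb
        simp only [D]; ring
    _ = D * K * h ^ 2 := by rw [integral_const_mul]; ring
    _ ≤ (|D * K| + 1) * h ^ 2 := by
        gcongr
        linarith [le_abs_self (D * K)]
end
end
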